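/- arXiv:1911.11733 — 8 statements merged into one kernel-verified Lean document; each statement's English description precedes it below -/
import Mathlib

section
/- Let G be a finite group. Then the commutator subgroup ⁅G,G⁆ is contained in the center Z(G) (equivalently, G is nilpotent of class at most 2) if and only if for every irreducible finite-dimensional complex representation V of G there exists an integer n ≥ 1 such that every irreducible constituent of the n-fold tensor power V^{⊗n} is one-dimensional (i.e. V^{⊗n} is a direct sum of one-dimensional subrepresentations). -/
open scoped TensorProduct

/-- The `n`-fold tensor power of a representation, with the diagonal `G`-action. -/
noncomputable def tensorPowerRep {k G V : Type*} [CommSemiring k] [Monoid G]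
    [AddCommMonoid V] [Module k V] (ρ : Representation k G V) (n : ℕ) :
    Representation k G (⨂[k] _ : Fin n, V) :=
  PiTensorProduct.mapMonoidHom.comp (Pi.monoidHom fun _ : Fin n => ρ)

/-!
All constituents of a semisimple representation are one-dimensional exactly when the commutator
subgroup acts trivially on it. On a tensor power `V^{⊗n}` with `n ≥ 1`, an element `c` can act
trivially only if it acts on `V` by a scalar. Conversely, by Schur's lemma a central `c` acts on an
irreducible `V` by a scalar `a` with `a ^ |G| = 1`, hence trivially on `V^{⊗|G|}`. Finally, an
element acting by a scalar on every irreducible subrepresentation of the regular representation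
commutes with all of `G` there, and is therefore central because that representation is faithful.
-/

open Representation
open scoped MonoidAlgebra commutatorElement

universe u v w

section Semisimple

variable {k G X : Type*} [Field k] [Monoid G] [AddCommGroup X] [Module k X]

theorem isSimpleModule_toRepresentation_ofSubmodule' (τ : Representation k G X)
    (m : Submodule k[G] τ.asModule) [IsSimpleModule k[G] m] :
    IsSimpleModule k[G] (Subrepresentation.ofSubmodule' m).toRepresentation.asModule := by
  let S := Subrepresentation.ofSubmodule' m
  let inclusion : S.toRepresentation.asModule →ₗ[k[G]] τ.asModule :=
    IntertwiningMap.equivLinearMapAsModule _ _ <|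
      S.toSubmodule.subtype.intertwiningMap_of_isIntertwiningMap S.toRepresentation τ
        fun _ _ => rfl
  have range_inclusion : LinearMap.range inclusion = m := SetLike.coe_injective Subtype.range_coe
  exact IsSimpleModule.congr <|
    (LinearEquiv.ofInjective inclusion Subtype.val_injective).trans
      (LinearEquiv.ofEq _ _ range_inclusion)

theorem linearMap_eq_of_eqOn_simple_subrepresentations {τ : Representation k G X}
    [IsSemisimpleModule k[G] τ.asModule] {Y : Type*} [AddCommMonoid Y] [Module k Y]
    {f g : X →ₗ[k] Y}
    (h : ∀ S : Subrepresentation τ, IsSimpleModule k[G] S.toRepresentation.asModule →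
      Set.EqOn f g S) : f = g := by
  ext x
  have hx : τ.asModuleEquiv.symm x ∈
      ⨆ m : {m : Submodule k[G] τ.asModule | IsSimpleModule k[G] m}, m.1 := by
    rw [← sSup_eq_iSup', IsSemisimpleModule.sSup_simples_eq_top]
    trivial
  refine Submodule.iSup_induction _
    (motive := fun y => f (τ.asModuleEquiv y) = g (τ.asModuleEquiv y)) hx ?_ ?_ ?_
  · rintro ⟨m, hm : IsSimpleModule k[G] m⟩ y hy
    exact h _ (isSimpleModule_toRepresentation_ofSubmodule' τ m) hy
  · simp only [map_zero]
  · intro y z hy hz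
    simp only [map_add, hy, hz]

end Semisimple

section OneDimensional

variable {k G W : Type*} [Field k] [AddCommGroup W] [Module k W]

theorem commutator_le_ker_of_forall_commute {M : Type*} [Group G] [Monoid M] (f : G →* M)
    (hf : ∀ g h, Commute (f g) (f h)) : commutator G ≤ f.ker := by
  rw [commutator_def, Subgroup.commutator_le]
  rintro g - h -
  calc f ⁅g, h⁆ = f g * f h * f (g⁻¹ * h⁻¹) := by
        rw [commutatorElement_def, mul_assoc, map_mul, map_mul]
    _ = f h * f g * f (g⁻¹ * h⁻¹) := by rw [(hf g h).eq]
    _ = f 1 := by simp only [← map_mul]; group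
    _ = 1 := map_one f

theorem commutator_le_ker_of_finrank_eq_one [Group G] (σ : Representation k G W)
    (hW : Module.finrank k W = 1) : commutator G ≤ σ.ker := by
  refine commutator_le_ker_of_forall_commute σ fun g h => ?_
  obtain ⟨a, ha, -⟩ := LinearMap.existsUnique_eq_smul_id_of_finrank_eq_one hW (σ g)
  rw [ha]
  exact (Commute.one_left (σ h)).smul_left a

theorem isIrreducible_of_comp {H : Type*} [Monoid G] [Monoid H] (φ : H →* G)
    (ρ : Representation k G W) (h : IsIrreducible (ρ.comp φ)) : ρ.IsIrreducible := by
  let restrict (S : Subrepresentation ρ) : Subrepresentation (ρ.comp φ) :=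
    ⟨S.toSubmodule, fun g => S.apply_mem_toSubmodule (φ g)⟩
  have restrict_injective : Function.Injective restrict := fun S T hST =>
    Subrepresentation.toSubmodule_injective congr(($hST).toSubmodule)
  have : Nontrivial (Subrepresentation ρ) :=
    ⟨⊥, ⊤, fun hbot => bot_ne_top (α := Subrepresentation (ρ.comp φ)) congr(restrict $hbot)⟩
  exact ⟨fun S => (h.eq_bot_or_eq_top (restrict S)).imp
    (fun hS => restrict_injective hS) fun hS => restrict_injective hS⟩

theorem finrank_eq_one_of_commutator_le_ker [Group G] [IsAlgClosed k] [FiniteDimensional k W]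
    (σ : Representation k G W) [hσ : σ.IsIrreducible] (hker : commutator G ≤ σ.ker) :
    Module.finrank k W = 1 := by
  let σab : Representation k (Abelianization G) W := QuotientGroup.lift (commutator G) σ hker
  have : σab.IsIrreducible := isIrreducible_of_comp Abelianization.of σab hσ
  exact IsIrreducible.finrank_eq_one_of_isMulCommutative σab

end OneDimensional

section Constituents

variable {k : Type u} {G : Type v} {X : Type w} [Field k] [AddCommGroup X] [Module k X]

/-- Every irreducible constituent of `τ` is one-dimensional. A constituent is encoded as a simple
representation `σ` on some `W` in the universe of `X`, together with a nonzero equivariant map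
`W → X`. -/
def ConstituentsAreLinear [Monoid G] (τ : Representation k G X) : Prop :=
  ∀ (W : Type w) [AddCommGroup W] [Module k W] (σ : Representation k G W),
    IsSimpleModule k[G] σ.asModule →
    ∀ f : W →ₗ[k] X, f ≠ 0 → (∀ (g : G) (w : W), f (σ g w) = τ g (f w)) →
    Module.finrank k W = 1

variable [Group G]

theorem constituentsAreLinear_of_commutator_le_ker [IsAlgClosed k] [FiniteDimensional k X]
    {τ : Representation k G X} (hker : commutator G ≤ τ.ker) : ConstituentsAreLinear τ := by
  intro W _ _ σ hσ f hf hfe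
  have : σ.IsIrreducible := (irreducible_iff_isSimpleModule_asModule σ).2 hσ
  have f_injective : Function.Injective f :=
    (IsIrreducible.injective_or_eq_zero
      (f.intertwiningMap_of_isIntertwiningMap σ τ hfe)).resolve_right
      fun h => hf congr(($h).toLinearMap)
  have : FiniteDimensional k W := .of_injective f f_injective
  refine finrank_eq_one_of_commutator_le_ker σ fun c hc => LinearMap.ext fun w => f_injective ?_
  rw [hfe, hker hc, Module.End.one_apply, Module.End.one_apply]

theorem ConstituentsAreLinear.commutator_le_ker {τ : Representation k G X}
    [IsSemisimpleModule k[G] τ.asModule] (hτ : ConstituentsAreLinear τ) :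
    commutator G ≤ τ.ker := by
  intro c hc
  refine linearMap_eq_of_eqOn_simple_subrepresentations (τ := τ) fun S hS x hx => ?_
  have : Nontrivial S.toSubmodule := IsSimpleModule.nontrivial k[G] S.toRepresentation.asModule
  have subtype_ne_zero : S.toSubmodule.subtype ≠ 0 := fun h =>
    S.toSubmodule.nontrivial_iff_ne_bot.1 this (by simpa using congr(LinearMap.range $h))
  have finrank_eq_one : Module.finrank k S.toSubmodule = 1 :=
    hτ _ S.toRepresentation hS S.toSubmodule.subtype subtype_ne_zero fun _ _ => rfl
  have hc1 : S.toRepresentation c = 1 :=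
    commutator_le_ker_of_finrank_eq_one S.toRepresentation finrank_eq_one hc
  exact congr((($hc1) ⟨x, hx⟩ : X))

end Constituents

section TensorPower

variable {k V ι : Type*}

theorem exists_eq_smul_one_of_piTensorProduct_map_eq_one [Field k] [AddCommGroup V] [Module k V]
    [Finite ι] [Nonempty ι] {T : Module.End k V}
    (hT : PiTensorProduct.map (fun _ : ι => T) = 1) : ∃ a : k, T = a • 1 := by
  have := Fintype.ofFinite ι
  refine LinearMap.exists_eq_smul_id_of_forall_notLinearIndependent fun v hv => ?_
  have hTv : T v ∉ k ∙ v := fun hmem => by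
    obtain ⟨a, ha⟩ := Submodule.mem_span_singleton.1 hmem
    exact (LinearIndependent.pair_iff' (hv.ne_zero 0)).1 hv a ha
  obtain ⟨φ, hφTv, hφ⟩ := Submodule.exists_le_ker_of_notMem hTv
  have hφv : φ v = 0 := hφ (Submodule.mem_span_singleton_self v)
  -- `φ^{⊗ι}` kills `v^{⊗ι}` but not `(T v)^{⊗ι}`, although these two tensors agree.
  let φpow : (⨂[k] _ : ι, V) →ₗ[k] k :=
    PiTensorProduct.lift ((MultilinearMap.mkPiAlgebra k ι k).compLinearMap fun _ => φ)
  have φpow_eq := congr(φpow ($hT (PiTensorProduct.tprod k fun _ => v)))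
  simp [φpow, hφv, hφTv] at φpow_eq

theorem piTensorProduct_map_smul_one_eq_one [CommSemiring k] [AddCommMonoid V] [Module k V]
    [Fintype ι] {a : k} (ha : a ^ Fintype.card ι = 1) :
    PiTensorProduct.map (fun _ : ι => a • (1 : Module.End k V)) = 1 := by
  have h := (PiTensorProduct.mapMultilinear k (fun _ : ι => V) (fun _ => V)).map_smul_univ
    (fun _ => a) (fun _ => 1)
  simpa [ha] using h

end TensorPower

section Center

variable {k G V : Type*} [Field k] [AddCommGroup V] [Module k V]

theorem exists_eq_smul_one_of_mem_center [Monoid G] [IsAlgClosed k] [FiniteDimensional k V]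
    (ρ : Representation k G V) [ρ.IsIrreducible] {c : G} (hc : c ∈ Submonoid.center G) :
    ∃ a : k, ρ c = a • 1 := by
  obtain ⟨a, ha⟩ := (IsIrreducible.algebraMap_intertwiningMap_bijective_of_isAlgClosed
    (ρ := ρ)).2 (IntertwiningMap.centralMul ρ c hc)
  exact ⟨a, congr(($ha).toLinearMap).symm⟩

theorem tensorPowerRep_eq_one_of_mem_center [Monoid G] [IsAlgClosed k] [FiniteDimensional k V]
    (ρ : Representation k G V) [ρ.IsIrreducible] {c : G} (hc : c ∈ Submonoid.center G)
    {n : ℕ} (hcn : c ^ n = 1) : tensorPowerRep ρ n c = 1 := by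
  obtain ⟨a, ha⟩ := exists_eq_smul_one_of_mem_center ρ hc
  have : Nontrivial V := IsSimpleModule.nontrivial k[G] ρ.asModule
  have smul_one_eq : a ^ n • (1 : Module.End k V) = (1 : k) • 1 :=
    calc a ^ n • (1 : Module.End k V) = ρ c ^ n := by rw [ha, smul_pow, one_pow]
      _ = (1 : k) • 1 := by rw [← map_pow, hcn, map_one, one_smul]
  have han : a ^ n = 1 := smul_left_injective k one_ne_zero smul_one_eq
  change PiTensorProduct.map (fun _ => ρ c) = 1
  rw [ha]
  exact piTensorProduct_map_smul_one_eq_one (by rwa [Fintype.card_fin])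

theorem leftRegular_injective (k G : Type*) [Semiring k] [Nontrivial k] [Monoid G] :
    Function.Injective (leftRegular k G) := fun g h hgh => by
  have := congr($hgh (.single 1 1))
  simpa [MonoidAlgebra.single_left_inj] using this

theorem mem_center_of_forall_eq_smul_one [Group G]
    [IsSemisimpleModule k[G] (leftRegular k G).asModule] {c : G}
    (hc : ∀ S : Subrepresentation (leftRegular k G),
      IsSimpleModule k[G] S.toRepresentation.asModule → ∃ a : k, S.toRepresentation c = a • 1) :
    c ∈ Subgroup.center G := by
  refine Subgroup.mem_center_iff.2 fun g => leftRegular_injective k G ?_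
  refine linearMap_eq_of_eqOn_simple_subrepresentations (τ := leftRegular k G) fun S hS x hx => ?_
  obtain ⟨a, ha⟩ := hc S hS
  have hcomm : S.toRepresentation (g * c) = S.toRepresentation (c * g) := by
    rw [map_mul, map_mul, ha, mul_smul_one, smul_one_mul]
  exact congr((($hcomm) ⟨x, hx⟩ : k[G]))

end Center

theorem commutator_le_center_iff_tensorPower_linearizes_general
    (k : Type u) (G : Type v) [Field k] [IsAlgClosed k] [Group G]
    [NeZero (Nat.card G : k)] :
    commutator G ≤ Subgroup.center G ↔
      ∀ (V : Type (max u v)) [AddCommGroup V] [Module k V] [FiniteDimensional k V]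
        (ρ : Representation k G V),
        IsSimpleModule k[G] ρ.asModule →
        ∃ n : ℕ, 1 ≤ n ∧ ConstituentsAreLinear (tensorPowerRep ρ n) := by
  have : NeZero (Nat.card G) := .of_neZero_natCast k
  have : Finite G := Nat.finite_of_card_ne_zero (NeZero.ne _)
  constructor
  · intro hG V _ _ _ ρ hρ
    have : ρ.IsIrreducible := (irreducible_iff_isSimpleModule_asModule ρ).2 hρ
    exact ⟨Nat.card G, Nat.card_pos, constituentsAreLinear_of_commutator_le_ker fun c hc =>
      tensorPowerRep_eq_one_of_mem_center ρ (hG hc) pow_card_eq_one'⟩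
  · intro h c hc
    refine mem_center_of_forall_eq_smul_one (k := k) fun S hS => ?_
    have : FiniteDimensional k k[G] :=
      Module.Finite.equiv (MonoidAlgebra.coeffLinearEquiv k).symm
    obtain ⟨n, hn, hlinear⟩ := h S.toSubmodule S.toRepresentation hS
    have : Nonempty (Fin n) := ⟨0, hn⟩
    exact exists_eq_smul_one_of_piTensorProduct_map_eq_one (hlinear.commutator_le_ker hc)

/-- **Characterization of nilpotency class ≤ 2**: for a finite group `G`, the commutator
subgroup is contained in the center if and only if for every irreducible finite-dimensional
complex representation `V` of `G` there is an `n ≥ 1` such that every irreducible constituent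
of `V^{⊗ n}` (with the diagonal action) is one-dimensional. -/
theorem commutator_le_center_iff_tensorPower_linearizes
    (G : Type) [Group G] [Finite G] :
    commutator G ≤ Subgroup.center G ↔
      ∀ (V : Type) [AddCommGroup V] [Module ℂ V] [FiniteDimensional ℂ V]
        (ρ : Representation ℂ G V),
        IsSimpleModule (MonoidAlgebra ℂ G) ρ.asModule →
        ∃ n : ℕ, 1 ≤ n ∧
          ∀ (W : Type) [AddCommGroup W] [Module ℂ W] (σ : Representation ℂ G W),
            IsSimpleModule (MonoidAlgebra ℂ G) σ.asModule →
            ∀ f : W →ₗ[ℂ] (⨂[ℂ] _ : Fin n, V), f ≠ 0 →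
              (∀ (g : G) (w : W), f (σ g w) = tensorPowerRep ρ n g (f w)) →
              Module.finrank ℂ W = 1 := by
  have : NeZero (Nat.card G : ℂ) := ⟨Nat.cast_ne_zero.2 Nat.card_pos.ne'⟩
  exact commutator_le_center_iff_tensorPower_linearizes_general ℂ G
end

section
/- Let K be an algebraically closed field of characteristic 0 and G a finite group. Let V₁, …, V_q be pairwise non-isomorphic simple K[G]-modules, let m₁, …, m_q be natural numbers, let M = ⊕_{i=1}^{q} V_i^{⊕ m_i}, and let v ∈ M have components v^i_j ∈ V_i for 1 ≤ i ≤ q, 1 ≤ j ≤ m_i (each copy of V_i in M being identified with V_i). Then for each i, the multiplicity of V_i in the cyclic submodule K[G]·v generated by v equals dim_K Span_K{v^i_1, …, v^i_{m_i}}; that is, dim_K Hom_{K[G]}(V_i, K[G]·v) = dim_K Span_K{v^i_1, …, v^i_{m_i}}. -/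
/-!
Write `A = K[G]` and `N = A·v`. Composition pairs `Hom(V i, N)` with `Hom(N, V i)` in
`End (V i) = K`; the pairing is perfect because `N` is semisimple, so the multiplicity is
`dim Hom(N, V i)`. A map out of `N` is determined by its value at `v`, and by semisimplicity it
extends to the whole module; by Schur's lemma the values at `v` of the maps from the whole module
to `V i` are exactly the `K`-linear combinations of the `v i k`.
-/

section Splitting

variable {A V N : Type*} [Ring A] [AddCommGroup V] [Module A V] [IsSimpleModule A V]
  [AddCommGroup N] [Module A N] [IsSemisimpleModule A N]

theorem exists_retraction_of_simple_of_ne_zero {f : V →ₗ[A] N} (hf : f ≠ 0) :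
    ∃ g : N →ₗ[A] V, g ∘ₗ f = LinearMap.id :=
  IsSemisimpleModule.extension_property f (f.injective_or_eq_zero.resolve_right hf) LinearMap.id

theorem exists_section_of_simple_of_ne_zero {g : N →ₗ[A] V} (hg : g ≠ 0) :
    ∃ f : V →ₗ[A] N, g ∘ₗ f = LinearMap.id :=
  IsSemisimpleModule.lifting_property g (g.surjective_or_eq_zero.resolve_right hg) LinearMap.id

end Splitting

section CompPairing

variable (K A V N : Type*) [CommRing K] [Ring A] [Algebra K A]
  [AddCommGroup V] [Module K V] [Module A V] [IsScalarTower K A V]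
  [AddCommGroup N] [Module K N] [Module A N] [IsScalarTower K A N]

/-- The composition pairing `(f, g) ↦ g ∘ f` between `Hom_A(V, N)` and `Hom_A(N, V)`, with values
in `End_A(V)`. -/
def compPairing : (V →ₗ[A] N) →ₗ[K] (N →ₗ[A] V) →ₗ[K] Module.End A V :=
  LinearMap.mk₂ K (fun f g ↦ g ∘ₗ f)
    (fun f f' g ↦ LinearMap.comp_add f f' g)
    (fun c f g ↦ LinearMap.ext fun x ↦ g.map_smul_of_tower c (f x))
    (fun f g g' ↦ LinearMap.add_comp f g' g)
    (fun c f g ↦ LinearMap.smul_comp c g f)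

variable {K A V N}

theorem compPairing_injective [IsSimpleModule A V] [IsSemisimpleModule A N] :
    Function.Injective (compPairing K A V N) := by
  refine (injective_iff_map_eq_zero _).2 fun f hf ↦ by_contra fun hne ↦ ?_
  obtain ⟨g, hgf⟩ := exists_retraction_of_simple_of_ne_zero hne
  have := IsSimpleModule.nontrivial A V
  exact one_ne_zero (hgf.symm.trans (LinearMap.congr_fun hf g))

theorem compPairing_flip_injective [IsSimpleModule A V] [IsSemisimpleModule A N] :
    Function.Injective (compPairing K A V N).flip := by
  refine (injective_iff_map_eq_zero _).2 fun g hg ↦ by_contra fun hne ↦ ?_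
  obtain ⟨f, hgf⟩ := exists_section_of_simple_of_ne_zero hne
  have := IsSimpleModule.nontrivial A V
  exact one_ne_zero (hgf.symm.trans (LinearMap.congr_fun hg f))

end CompPairing

theorem finrank_hom_comm_of_simple {K A V N : Type*} [Field K] [Ring A] [Algebra K A]
    [AddCommGroup V] [Module K V] [Module A V] [IsScalarTower K A V] [IsSimpleModule A V]
    [AddCommGroup N] [Module K N] [Module A N] [IsScalarTower K A N] [IsSemisimpleModule A N]
    [FiniteDimensional K (N →ₗ[A] V)]
    (hEnd : Function.Surjective (algebraMap K (Module.End A V))) :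
    Module.finrank K (V →ₗ[A] N) = Module.finrank K (N →ₗ[A] V) := by
  have := IsSimpleModule.nontrivial A V
  let e : Module.End A V ≃ₗ[K] K := (LinearEquiv.ofBijective
    (Algebra.linearMap K (Module.End A V)) ⟨(algebraMap K _).injective, hEnd⟩).symm
  let B : (V →ₗ[A] N) →ₗ[K] (N →ₗ[A] V) →ₗ[K] K := (compPairing K A V N).compr₂ e
  have hB : Function.Injective B :=
    LinearMap.injective_compr₂_of_injective _ _ compPairing_injective e.injective
  have hBflip : Function.Injective B.flip :=
    LinearMap.injective_compr₂_of_injective _ (e : Module.End A V →ₗ[K] K)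
      compPairing_flip_injective e.injective
  have : FiniteDimensional K (V →ₗ[A] N) := FiniteDimensional.of_injective B hB
  have : B.IsPerfPair := LinearMap.IsPerfPair.of_injective hB hBflip
  exact Module.finrank_of_isPerfPair B

section Cyclic

variable (K : Type*) {A M : Type*} (W : Type*) [Semiring K] [Ring A] [AddCommGroup M] [Module A M]
  [AddCommGroup W] [Module K W] [Module A W] [SMulCommClass A K W] (v : M)

/-- Evaluation of `A`-linear maps `A·v → W` at the generator `v`, as a `K`-linear map. -/
def evalGenerator : (Submodule.span A {v} →ₗ[A] W) →ₗ[K] W :=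
  LinearMap.applyₗ' K ⟨v, Submodule.mem_span_singleton_self v⟩

theorem evalGenerator_injective : Function.Injective (evalGenerator K (A := A) W v) := by
  intro f g hfg
  ext ⟨x, hx⟩
  obtain ⟨a, rfl⟩ := Submodule.mem_span_singleton.1 hx
  have hgen : (⟨a • v, hx⟩ : Submodule.span A {v}) =
      a • ⟨v, Submodule.mem_span_singleton_self v⟩ := rfl
  rw [hgen, map_smul, map_smul]
  exact congrArg (a • ·) hfg

theorem range_evalGenerator [IsSemisimpleModule A M] :
    LinearMap.range (evalGenerator K (A := A) W v) =
      LinearMap.range (LinearMap.applyₗ' K v : (M →ₗ[A] W) →ₗ[K] W) := by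
  apply le_antisymm
  · rintro _ ⟨f, rfl⟩
    obtain ⟨g, rfl⟩ := IsSemisimpleModule.extension_property
      (Submodule.span A {v}).subtype (Submodule.injective_subtype _) f
    exact ⟨g, rfl⟩
  · rintro _ ⟨g, rfl⟩
    exact ⟨g ∘ₗ (Submodule.span A {v}).subtype, rfl⟩

end Cyclic

theorem finrank_hom_span_singleton {K A V M : Type*} [Field K] [Ring A] [Algebra K A]
    [AddCommGroup V] [Module K V] [Module A V] [IsScalarTower K A V] [IsSimpleModule A V]
    [AddCommGroup M] [Module K M] [Module A M] [IsScalarTower K A M] [IsSemisimpleModule A M]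
    (hEnd : Function.Surjective (algebraMap K (Module.End A V))) (v : M)
    [FiniteDimensional K
      (LinearMap.range (LinearMap.applyₗ' K v : (M →ₗ[A] V) →ₗ[K] V))] :
    Module.finrank K (V →ₗ[A] Submodule.span A {v}) =
      Module.finrank K (LinearMap.range (LinearMap.applyₗ' K v : (M →ₗ[A] V) →ₗ[K] V)) := by
  let e := (LinearEquiv.ofInjective _ (evalGenerator_injective K (A := A) V v)).trans
    (LinearEquiv.ofEq _ _ (range_evalGenerator K V v))
  have : FiniteDimensional K (Submodule.span A {v} →ₗ[A] V) := Module.Finite.equiv e.symm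
  exact (finrank_hom_comm_of_simple hEnd).trans e.finrank_eq

section Product

variable {K A : Type*} [CommRing K] [Ring A] [Algebra K A]
  {ι : Type*} [Finite ι] {V : ι → Type*} [∀ j, AddCommGroup (V j)] [∀ j, Module A (V j)]
  {κ : ι → Type*} [∀ j, Finite (κ j)] {i : ι} [Module K (V i)] [IsScalarTower K A (V i)]

theorem apply_mem_span_range_of_hom_eq_zero
    (hEnd : Function.Surjective (algebraMap K (Module.End A (V i))))
    (hHom : ∀ j ≠ i, ∀ φ : V j →ₗ[A] V i, φ = 0)
    (f : ((j : ι) → κ j → V j) →ₗ[A] V i) (v : (j : ι) → κ j → V j) :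
    f v ∈ Submodule.span K (Set.range (v i)) := by
  classical
  have := Fintype.ofFinite ι
  have := fun j ↦ Fintype.ofFinite (κ j)
  let φ (j : ι) (k : κ j) : V j →ₗ[A] V i :=
    f ∘ₗ LinearMap.single A (fun j ↦ κ j → V j) j ∘ₗ LinearMap.single A (fun _ ↦ V j) k
  have hf : f v = ∑ j, ∑ k, φ j k (v j k) := by
    have hsum (j : ι) : ∑ k, φ j k (v j k) = f (Pi.single j (v j)) := by
      conv_rhs => rw [← Finset.univ_sum_single (v j)]
      exact (map_sum (f ∘ₗ LinearMap.single A (fun j ↦ κ j → V j) j) _ _).symm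
    simp only [hsum, ← map_sum, Finset.univ_sum_single]
  rw [hf]
  refine Submodule.sum_mem _ fun j _ ↦ Submodule.sum_mem _ fun k _ ↦ ?_
  obtain rfl | hji := eq_or_ne j i
  · obtain ⟨c, hc⟩ := hEnd (φ j k)
    rw [← hc]
    exact Submodule.smul_mem _ c (Submodule.subset_span ⟨k, rfl⟩)
  · rw [hHom j hji (φ j k)]
    exact Submodule.zero_mem _

theorem range_apply_eq_span_range
    (hEnd : Function.Surjective (algebraMap K (Module.End A (V i))))
    (hHom : ∀ j ≠ i, ∀ φ : V j →ₗ[A] V i, φ = 0) (v : (j : ι) → κ j → V j) :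
    LinearMap.range (LinearMap.applyₗ' K v : (((j : ι) → κ j → V j) →ₗ[A] V i) →ₗ[K] V i) =
      Submodule.span K (Set.range (v i)) := by
  apply le_antisymm
  · rintro _ ⟨f, rfl⟩
    exact apply_mem_span_range_of_hom_eq_zero hEnd hHom f v
  · rw [Submodule.span_le]
    rintro _ ⟨k, rfl⟩
    exact ⟨LinearMap.proj k ∘ₗ LinearMap.proj i, rfl⟩

end Product

theorem multiplicity_of_cyclic_submodule_general
    {K A : Type*} [Field K] [Ring A] [Algebra K A]
    {ι : Type*} [Finite ι] {V : ι → Type*}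
    [∀ j, AddCommGroup (V j)] [∀ j, Module K (V j)] [∀ j, Module A (V j)]
    [∀ j, IsScalarTower K A (V j)] [∀ j, IsSimpleModule A (V j)]
    {κ : ι → Type*} [∀ j, Finite (κ j)] {i : ι}
    (hEnd : Function.Surjective (algebraMap K (Module.End A (V i))))
    (hnoniso : ∀ j ≠ i, IsEmpty (V j ≃ₗ[A] V i)) (v : (j : ι) → κ j → V j) :
    Module.finrank K (V i →ₗ[A] Submodule.span A {v}) =
      Module.finrank K (Submodule.span K (Set.range (v i))) := by
  have hHom (j : ι) (hji : j ≠ i) (φ : V j →ₗ[A] V i) : φ = 0 :=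
    φ.bijective_or_eq_zero.resolve_left fun hφ ↦
      (hnoniso j hji).false (LinearEquiv.ofBijective φ hφ)
  have hrange := range_apply_eq_span_range hEnd hHom v
  have : FiniteDimensional K (LinearMap.range
      (LinearMap.applyₗ' K v : (((j : ι) → κ j → V j) →ₗ[A] V i) →ₗ[K] V i)) :=
    hrange ▸ FiniteDimensional.span_of_finite K (Set.finite_range (v i))
  rw [finrank_hom_span_singleton hEnd v, hrange]

/-- **Multiplicities in a cyclic submodule.** Let `K` be an algebraically closed field of
characteristic 0, `G` a finite group, `V₁, …, V_q` pairwise non-isomorphic simple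
`K[G]`-modules, and `M = ⊕ᵢ Vᵢ^{⊕ mᵢ}` (realized as `Π i, Fin (m i) → V i`). For
`v ∈ M` with components `v i j ∈ V i`, the multiplicity of `V i` in the cyclic submodule
`K[G]·v`, i.e. `dim_K Hom_{K[G]}(V i, K[G]·v)`, equals `dim_K Span_K {v i 1, …, v i mᵢ}`. -/
theorem multiplicity_of_cyclic_submodule
    (K : Type) [Field K] [IsAlgClosed K] [CharZero K]
    (G : Type) [Group G] [Finite G]
    (q : ℕ) (V : Fin q → Type)
    [∀ i, AddCommGroup (V i)] [∀ i, Module K (V i)]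
    [∀ i, Module (MonoidAlgebra K G) (V i)]
    [∀ i, IsScalarTower K (MonoidAlgebra K G) (V i)]
    (hsimple : ∀ i, IsSimpleModule (MonoidAlgebra K G) (V i))
    (hnoniso : ∀ i j, i ≠ j → ¬ Nonempty (V i ≃ₗ[MonoidAlgebra K G] V j))
    (m : Fin q → ℕ)
    (v : (i : Fin q) → Fin (m i) → V i)
    (i : Fin q) :
    Module.finrank K
        (V i →ₗ[MonoidAlgebra K G]
          ↥(Submodule.span (MonoidAlgebra K G)
              ({v} : Set ((i : Fin q) → Fin (m i) → V i))))
      = Module.finrank K ↥(Submodule.span K (Set.range (v i))) := by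
  have : FiniteDimensional K (V i) := Module.Finite.trans (MonoidAlgebra K G) (V i)
  exact multiplicity_of_cyclic_submodule_general
    (IsSimpleModule.algebraMap_end_bijective_of_isAlgClosed K).surjective
    (fun j hji ↦ not_nonempty_iff.1 (hnoniso j i hji)) v
end

section
/- Let K be an algebraically closed field of characteristic 0, G a finite group, V a simple K[G]-module, m a natural number, and v = (v₁, …, v_m) ∈ V^{⊕ m}. Then the K-dimension of the cyclic K[G]-submodule K[G]·v of V^{⊕ m} generated by v equals dim_K (Span_K{v₁, …, v_m}) · dim_K V. -/
/-!
Put `A = K[G]` and let `W` be the `K`-span of the components of `v`. Evaluation at the components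
is an injective `A`-linear map `Hom_K(W, V) → V^m` sending the inclusion `W → V` to `v`. By Schur's
lemma and Jacobson density, `A` acts on `V` through all of `End_K(V)`, and every `K`-linear map
`W → V` extends to `V`, so the inclusion generates `Hom_K(W, V)` over `A`. Hence
`A·v ≅ Hom_K(W, V)`.
-/

open Module Submodule Function

section Evaluation

variable {R : Type*} (S : Type*) {M N ι : Type*} [CommSemiring R] [Semiring S]
  [AddCommMonoid M] [Module R M] [AddCommMonoid N] [Module R N] [Module S N] [SMulCommClass R S N]

/-- Evaluation `f ↦ (f (v i))ᵢ` of `R`-linear maps on the span of a family `v`. It is linear over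
any `S` acting on the codomain compatibly with `R`, so that it can be compared with `S`-spans. -/
def spanRangeEval (v : ι → M) : (span R (Set.range v) →ₗ[R] N) →ₗ[S] (ι → N) :=
  LinearMap.pi fun i ↦ LinearMap.applyₗ' S ⟨v i, subset_span (Set.mem_range_self i)⟩

theorem spanRangeEval_injective (v : ι → M) :
    Injective (spanRangeEval (R := R) (N := N) S v) := fun _ _ h ↦
  LinearMap.ext_on_range
    ((span_range_subtype_eq_top_iff _ fun i ↦ subset_span (Set.mem_range_self i)).2 rfl)
    (congrFun h)

end Evaluation

theorem lsmul_surjective_of_algebraMap_end_surjective {R A M : Type*} [CommSemiring R] [Ring A]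
    [Algebra R A] [AddCommGroup M] [Module R M] [Module A M] [IsScalarTower R A M]
    [Module.Finite R M] [IsSemisimpleModule A M]
    (hend : Surjective (algebraMap R (End A M))) :
    Surjective (Algebra.lsmul R R M : A → End R M) := by
  intro f
  have : Module.Finite (End A M) M := .of_restrictScalars_finite R _ _
  let g : End (End A M) M :=
    { f with
      map_smul' := hend.forall.2 fun c x ↦ by simp }
  obtain ⟨a, ha⟩ := Module.Finite.toModuleEnd_moduleEnd_surjective g
  exact ⟨a, LinearMap.ext fun x ↦ congr($ha x)⟩

section CyclicSubmodule

variable {K A V : Type*} [Field K] [Ring A] [Algebra K A] [AddCommGroup V] [Module K V]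
  [Module A V] [IsScalarTower K A V]

theorem span_singleton_subtype_eq_top_of_lsmul_surjective
    (hA : Surjective (Algebra.lsmul K K V : A → End K V)) (W : Submodule K V) :
    span A {W.subtype} = ⊤ := by
  refine eq_top_iff'.2 fun f ↦ mem_span_singleton.2 ?_
  obtain ⟨g, hg⟩ := f.exists_extend
  obtain ⟨a, rfl⟩ := hA g
  exact ⟨a, hg⟩

theorem range_spanRangeEval_of_lsmul_surjective {ι : Type*}
    (hA : Surjective (Algebra.lsmul K K V : A → End K V)) (v : ι → V) :
    LinearMap.range (spanRangeEval (R := K) (N := V) A v) = span A {v} := by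
  have eval_subtype : spanRangeEval A v (span K (Set.range v)).subtype = v := rfl
  rw [LinearMap.range_eq_map, ← span_singleton_subtype_eq_top_of_lsmul_surjective hA, map_span,
    Set.image_singleton, eval_subtype]

theorem finrank_cyclic_submodule_of_simple_pow_general {ι : Type*} [FiniteDimensional K V]
    [IsSemisimpleModule A V] (hend : Surjective (algebraMap K (End A V))) (v : ι → V) :
    finrank K (span A {v}) = finrank K (span K (Set.range v)) * finrank K V := by
  have hA := lsmul_surjective_of_algebraMap_end_surjective hend
  have evalEquiv := LinearEquiv.ofInjective _ (spanRangeEval_injective (R := K) (N := V) A v)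
  calc finrank K (span A {v})
      = finrank K (LinearMap.range (spanRangeEval (R := K) (N := V) A v)) := by
        rw [range_spanRangeEval_of_lsmul_surjective hA]
    _ = finrank K (span K (Set.range v) →ₗ[K] V) :=
        (evalEquiv.restrictScalars K).finrank_eq.symm
    _ = finrank K (span K (Set.range v)) * finrank K V := finrank_linearMap ..

end CyclicSubmodule

/-- **Dimension of a cyclic submodule of `V^{⊕ m}`.** Let `K` be an algebraically closed
field of characteristic 0, `G` a finite group, `V` a simple `K[G]`-module, and
`v = (v₁, …, v_m) ∈ V^{⊕ m}`. Then the `K`-dimension of the cyclic `K[G]`-submodule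
generated by `v` equals `dim_K (Span_K {v₁, …, v_m}) · dim_K V`. -/
theorem finrank_cyclic_submodule_of_simple_pow
    (K : Type) [Field K] [IsAlgClosed K] [CharZero K]
    (G : Type) [Group G] [Finite G]
    (V : Type) [AddCommGroup V] [Module K V]
    [Module (MonoidAlgebra K G) V] [IsScalarTower K (MonoidAlgebra K G) V]
    (hV : IsSimpleModule (MonoidAlgebra K G) V)
    (m : ℕ) (v : Fin m → V) :
    Module.finrank K
        ↥(Submodule.span (MonoidAlgebra K G) ({v} : Set (Fin m → V)))
      = Module.finrank K ↥(Submodule.span K (Set.range v)) * Module.finrank K V := by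
  have : FiniteDimensional K V := Module.Finite.trans (MonoidAlgebra K G) V
  exact finrank_cyclic_submodule_of_simple_pow_general
    (IsSimpleModule.algebraMap_end_bijective_of_isAlgClosed K).2 v
end

section
/- Let K be an algebraically closed field of characteristic 0 and G a finite group. Let V₁, …, V_q be pairwise non-isomorphic simple K[G]-modules, let m₁, …, m_q be natural numbers, let M = ⊕_{i=1}^{q} V_i^{⊕ m_i}, and let v ∈ M have components v^i_j ∈ V_i for 1 ≤ i ≤ q, 1 ≤ j ≤ m_i. Then the cyclic submodule K[G]·v equals all of M if and only if for every i the family (v^i_1, …, v^i_{m_i}) is linearly independent over K (in particular this forces m_i ≤ dim_K V_i for all i). -/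
/-!
The idea is the duality between cyclic and separating vectors. A vector `v` of a semisimple module
`M` generates `M` if and only if no nonzero endomorphism of `M` kills `v`: the projection onto a
complement of the submodule generated by `v` kills `v`. If `M = ⊕ᵢ Vᵢ^{mᵢ}` with no nonzero
homomorphisms between different `Vᵢ`, this condition can be tested on the homomorphisms
`Vᵢ^{mᵢ} → Vᵢ`, which are the forms `w ↦ ∑ⱼ cⱼ wⱼ` with `cⱼ ∈ End(Vᵢ)`. Hence `v` generates `M` if
and only if each family `(vⁱⱼ)ⱼ` is linearly independent over `End(Vᵢ)`, and Schur's lemma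
identifies `End(Vᵢ)` with `K`.
-/

section Separating

variable {A M U V ι : Type*} [Ring A] [AddCommGroup M] [Module A M] [AddCommGroup U] [Module A U]
  [AddCommGroup V] [Module A V]

variable (A U) in
/-- `v` is *separating* for the homomorphisms into `U` if the zero map is the only homomorphism
into `U` that kills `v`. For `U = M` this says that `v` is a separating vector of the commutant
`Module.End A M`, in the terminology of operator algebras. -/
def IsSeparating (v : M) : Prop :=
  ∀ f : M →ₗ[A] U, f v = 0 → f = 0

theorem span_singleton_eq_top_iff_isSeparating [IsSemisimpleModule A M] {v : M} :
    Submodule.span A {v} = ⊤ ↔ IsSeparating A M v := by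
  refine ⟨fun hv f hf ↦ LinearMap.ext_on hv (by simpa [Set.EqOn] using hf), fun hv ↦ ?_⟩
  obtain ⟨N, hN⟩ := exists_isCompl (Submodule.span A {v})
  let p := Submodule.projection N _ hN.symm
  have ker_eq : LinearMap.ker p = Submodule.span A {v} := Submodule.ker_projection hN.symm
  have apply_eq_zero : p v = 0 := by
    rw [← LinearMap.mem_ker, ker_eq]
    exact Submodule.mem_span_singleton_self v
  rw [← ker_eq, hv p apply_eq_zero, LinearMap.ker_zero]

theorem isSeparating_pi_iff {U : ι → Type*} [∀ i, AddCommGroup (U i)] [∀ i, Module A (U i)]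
    {v : M} : IsSeparating A (∀ i, U i) v ↔ ∀ i, IsSeparating A (U i) v := by
  classical
  refine ⟨fun hv i f hf ↦ ?_, fun hv f hf ↦ ?_⟩
  · have single_comp_eq_zero := hv (LinearMap.single A U i ∘ₗ f) (by simp [hf])
    rw [← LinearMap.id_comp f, ← LinearMap.proj_comp_single_same A U i, LinearMap.comp_assoc,
      single_comp_eq_zero, LinearMap.comp_zero]
  · ext x i
    exact LinearMap.congr_fun (hv i (LinearMap.proj i ∘ₗ f) (by simp [hf])) x

theorem isSeparating_iff_apply [Finite ι] {W : ι → Type*} [∀ i, AddCommGroup (W i)]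
    [∀ i, Module A (W i)] {i : ι} (hom_eq_zero : ∀ k, k ≠ i → Subsingleton (W k →ₗ[A] U))
    {v : ∀ i, W i} : IsSeparating A U v ↔ IsSeparating A U (v i) := by
  classical
  refine ⟨fun hv g hg ↦ ?_, fun hv f hf ↦ ?_⟩
  · rw [← LinearMap.comp_id g, ← LinearMap.proj_comp_single_same A W i, ← LinearMap.comp_assoc,
      hv (g ∘ₗ LinearMap.proj i) hg, LinearMap.zero_comp]
  · have factors : f = (f ∘ₗ LinearMap.single A W i) ∘ₗ LinearMap.proj i := by
      refine LinearMap.pi_ext' fun k ↦ ?_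
      obtain rfl | hk := eq_or_ne k i
      · rw [LinearMap.comp_assoc, LinearMap.proj_comp_single_same, LinearMap.comp_id]
      · have := hom_eq_zero k hk
        exact Subsingleton.elim _ _
    rw [factors, hv (f ∘ₗ LinearMap.single A W i) (by rwa [factors] at hf), LinearMap.zero_comp]

theorem isSeparating_iff_linearIndependent_end [Finite ι] {v : ι → V} :
    IsSeparating A V v ↔ LinearIndependent (Module.End A V) v := by
  classical
  cases nonempty_fintype ι
  let homEquiv : (ι → Module.End A V) ≃+ ((ι → V) →ₗ[A] V) :=
    (LinearMap.lsum A (fun _ ↦ V) ℕ).toAddEquiv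
  have homEquiv_apply (c : ι → Module.End A V) : homEquiv c v = ∑ i, c i • v i := by
    simp [homEquiv]
  rw [Fintype.linearIndependent_iff, IsSeparating, ← homEquiv.toEquiv.forall_congr_right]
  refine forall_congr' fun c ↦ ?_
  simp [homEquiv_apply, funext_iff]

end Separating

section Cyclic

variable {A ι : Type*} [Ring A] [Finite ι]

theorem subsingleton_linearMap_pi {κ : Type*} {W : ι → Type*} [∀ i, AddCommGroup (W i)]
    [∀ i, Module A (W i)] {U : κ → Type*} [∀ k, AddCommGroup (U k)] [∀ k, Module A (U k)]
    (h : ∀ i k, Subsingleton (W i →ₗ[A] U k)) :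
    Subsingleton ((∀ i, W i) →ₗ[A] ∀ k, U k) := by
  classical
  refine ⟨fun f g ↦ LinearMap.pi_ext' fun i ↦ ?_⟩
  ext x k
  exact LinearMap.congr_fun (Subsingleton.elim (LinearMap.proj k ∘ₗ f ∘ₗ LinearMap.single A W i)
    (LinearMap.proj k ∘ₗ g ∘ₗ LinearMap.single A W i)) x

theorem span_singleton_pi_eq_top_iff {W : ι → Type*} [∀ i, AddCommGroup (W i)]
    [∀ i, Module A (W i)] [∀ i, IsSemisimpleModule A (W i)]
    (hW : Pairwise fun i j ↦ Subsingleton (W i →ₗ[A] W j)) {v : ∀ i, W i} :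
    Submodule.span A {v} = ⊤ ↔ ∀ i, Submodule.span A {v i} = ⊤ := by
  simp only [span_singleton_eq_top_iff_isSeparating, isSeparating_pi_iff]
  exact forall_congr' fun i ↦ isSeparating_iff_apply fun k hk ↦ hW hk

theorem span_singleton_eq_top_iff_linearIndependent_end {V : Type*} [AddCommGroup V] [Module A V]
    [IsSemisimpleModule A V] {v : ι → V} :
    Submodule.span A {v} = ⊤ ↔ LinearIndependent (Module.End A V) v := by
  rw [span_singleton_eq_top_iff_isSeparating, isSeparating_pi_iff,
    ← isSeparating_iff_linearIndependent_end]
  cases isEmpty_or_nonempty ι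
  · exact iff_of_true isEmptyElim fun f _ ↦ Subsingleton.elim f 0
  · exact forall_const ι

end Cyclic

section Schur

variable {K A : Type*} [CommSemiring K] [Ring A] [Algebra K A]

theorem subsingleton_linearMap_of_not_nonempty_linearEquiv {V W : Type*} [AddCommGroup V]
    [Module A V] [AddCommGroup W] [Module A W] [IsSimpleModule A V] [IsSimpleModule A W]
    (h : ¬ Nonempty (V ≃ₗ[A] W)) : Subsingleton (V →ₗ[A] W) :=
  subsingleton_of_forall_eq 0 fun f ↦ f.bijective_or_eq_zero.resolve_left fun hf ↦
    h ⟨LinearEquiv.ofBijective f hf⟩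

theorem linearIndependent_end_iff_of_bijective_algebraMap {ι V : Type*} [AddCommGroup V]
    [Module K V] [Module A V] [IsScalarTower K A V]
    (hEnd : Function.Bijective (algebraMap K (Module.End A V))) {v : ι → V} :
    LinearIndependent (Module.End A V) v ↔ LinearIndependent K v :=
  ⟨fun hv ↦ hv.map_of_injective_injectiveₛ (algebraMap K (Module.End A V)) (.id V) hEnd.injective
    Function.injective_id fun _ _ ↦ rfl,
  fun hv ↦ hv.map_of_surjective_injectiveₛ (algebraMap K (Module.End A V)) (.id V)
    hEnd.surjective Function.injective_id fun _ _ ↦ rfl⟩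

theorem cyclic_submodule_eq_top_iff_linearIndependent_general {ι : Type*} [Finite ι]
    {κ : ι → Type*} [∀ i, Finite (κ i)] {V : ι → Type*} [∀ i, AddCommGroup (V i)]
    [∀ i, Module K (V i)] [∀ i, Module A (V i)] [∀ i, IsScalarTower K A (V i)]
    [∀ i, IsSimpleModule A (V i)]
    (hEnd : ∀ i, Function.Bijective (algebraMap K (Module.End A (V i))))
    (hnoniso : Pairwise fun i j ↦ ¬ Nonempty (V i ≃ₗ[A] V j)) (v : ∀ i, κ i → V i) :
    Submodule.span A {v} = ⊤ ↔ ∀ i, LinearIndependent K (v i) := by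
  have hom_disjoint : Pairwise fun i j ↦ Subsingleton ((κ i → V i) →ₗ[A] (κ j → V j)) :=
    fun i j hij ↦ subsingleton_linearMap_pi fun _ _ ↦
      subsingleton_linearMap_of_not_nonempty_linearEquiv (hnoniso hij)
  rw [span_singleton_pi_eq_top_iff hom_disjoint]
  exact forall_congr' fun i ↦ span_singleton_eq_top_iff_linearIndependent_end.trans
    (linearIndependent_end_iff_of_bijective_algebraMap (hEnd i))

end Schur

/-- **Cyclicity criterion.** Let `K` be an algebraically closed field of characteristic 0,
`G` a finite group, `V₁, …, V_q` pairwise non-isomorphic simple `K[G]`-modules, and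
`M = ⊕ᵢ Vᵢ^{⊕ mᵢ}` (realized as `Π i, Fin (m i) → V i`). For `v ∈ M` with components
`v i j ∈ V i`, the cyclic submodule `K[G]·v` equals all of `M` if and only if for every `i`
the family `(v i 1, …, v i mᵢ)` is linearly independent over `K`. -/
theorem cyclic_submodule_eq_top_iff_linearIndependent
    (K : Type) [Field K] [IsAlgClosed K] [CharZero K]
    (G : Type) [Group G] [Finite G]
    (q : ℕ) (V : Fin q → Type)
    [∀ i, AddCommGroup (V i)] [∀ i, Module K (V i)]
    [∀ i, Module (MonoidAlgebra K G) (V i)]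
    [∀ i, IsScalarTower K (MonoidAlgebra K G) (V i)]
    (hsimple : ∀ i, IsSimpleModule (MonoidAlgebra K G) (V i))
    (hnoniso : ∀ i j, i ≠ j → ¬ Nonempty (V i ≃ₗ[MonoidAlgebra K G] V j))
    (m : Fin q → ℕ)
    (v : (i : Fin q) → Fin (m i) → V i) :
    Submodule.span (MonoidAlgebra K G)
        ({v} : Set ((i : Fin q) → Fin (m i) → V i)) = ⊤
      ↔ ∀ i, LinearIndependent K (v i) := by
  have (i : Fin q) : Module.Finite K (V i) := .trans (MonoidAlgebra K G) (V i)
  exact cyclic_submodule_eq_top_iff_linearIndependent_general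
    (fun _ ↦ IsSimpleModule.algebraMap_end_bijective_of_isAlgClosed K) hnoniso v
end

section
/- Let K be an algebraically closed field of characteristic 0, G a finite group, U a simple K[G]-module, and m ≥ 1. Let u = (u₁, …, u_m) and v = (v₁, …, v_m) be elements of U^{⊕ m} such that both families (u₁, …, u_m) and (v₁, …, v_m) are linearly independent over K. Then there exist a K[G]-module automorphism φ of U^{⊕ m} and a nonzero scalar c ∈ K with φ(u) = c · v if and only if Span_K{u₁, …, u_m} = Span_K{v₁, …, v_m}. -/
/-!
By Schur's lemma every endomorphism of `U` is a scalar, so the endomorphisms of `U^{⊕ m}` are the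
`m × m` matrices over `K`, acting by `K`-linear combinations of the components. Hence an
automorphism preserves the `K`-span of the components of a vector. Conversely, two families with the
same span are the images of the standard basis under two maps out of `K^m` with the same range; such
maps differ by an automorphism of `K^m`, because their kernels have the same dimension, and the
matrix of that automorphism carries one family to the other.
-/

open scoped Matrix.Module

section RangeEq

theorem exists_linearEquiv_ker_prod_range {R M N : Type*} [Ring R] [AddCommGroup M] [Module R M]
    [AddCommGroup N] [Module R N] (f : M →ₗ[R] N) [Module.Projective R (LinearMap.range f)] :
    ∃ e : M ≃ₗ[R] LinearMap.ker f × LinearMap.range f, ∀ x, ((e x).2 : N) = f x := by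
  obtain ⟨s, hs⟩ := f.rangeRestrict.exists_rightInverse_of_surjective f.range_rangeRestrict
  have exact_ker : Function.Exact (LinearMap.ker f).subtype f.rangeRestrict := by
    rw [← f.ker_rangeRestrict]
    exact f.rangeRestrict.exact_subtype_ker_map
  obtain ⟨e, -, he⟩ :=
    exact_ker.splitSurjectiveEquiv (LinearMap.ker f).injective_subtype ⟨s, hs⟩
  exact ⟨e, fun x => congrArg Subtype.val (LinearMap.congr_fun he x).symm⟩

theorem exists_linearEquiv_comp_eq_of_range_eq {K V W : Type*} [DivisionRing K]
    [AddCommGroup V] [Module K V] [FiniteDimensional K V] [AddCommGroup W] [Module K W]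
    {f g : V →ₗ[K] W} (h : LinearMap.range f = LinearMap.range g) :
    ∃ e : V ≃ₗ[K] V, g ∘ₗ e = f := by
  have finrank_ker_eq :
      Module.finrank K (LinearMap.ker f) = Module.finrank K (LinearMap.ker g) := by
    have hf := f.finrank_range_add_finrank_ker
    have hg := g.finrank_range_add_finrank_ker
    rw [h] at hf
    lia
  obtain ⟨ef, hef⟩ := exists_linearEquiv_ker_prod_range f
  obtain ⟨eg, heg⟩ := exists_linearEquiv_ker_prod_range g
  let kerProdRange := (LinearEquiv.ofFinrankEq _ _ finrank_ker_eq).prodCongr (.ofEq _ _ h)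
  refine ⟨ef ≪≫ₗ kerProdRange ≪≫ₗ eg.symm, LinearMap.ext fun x => ?_⟩
  simp [← heg, ← hef, kerProdRange]

end RangeEq

section MatrixAction

variable {ι R U : Type*} [Fintype ι] [DecidableEq ι] [Ring R] [AddCommGroup U] [Module R U]

instance matrix_smulCommClass {A : Type*} [DistribSMul A U] [SMulCommClass R A U] :
    SMulCommClass (Matrix ι ι R) A (ι → U) where
  smul_comm P a x := by
    ext i
    simp [Finset.smul_sum, smul_comm]

theorem span_range_matrix_smul_le (P : Matrix ι ι R) (u : ι → U) :
    Submodule.span R (Set.range (P • u)) ≤ Submodule.span R (Set.range u) := by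
  rw [Submodule.span_le]
  rintro _ ⟨i, rfl⟩
  exact Submodule.sum_mem _ fun j _ =>
    Submodule.smul_mem _ _ (Submodule.subset_span (Set.mem_range_self j))

theorem toMatrixRight'_smul_apply (f : (ι → R) →ₗ[R] (ι → R)) (v : ι → U) (i : ι) :
    (f.toMatrixRight' • v) i = Fintype.linearCombination R v (f (Pi.single i 1)) :=
  rfl

theorem exists_matrix_units_smul_eq_of_span_range_eq {K : Type*} [DivisionRing K] [Module K U]
    {u v : ι → U} (h : Submodule.span K (Set.range u) = Submodule.span K (Set.range v)) :
    ∃ P : (Matrix ι ι K)ˣ, P • u = v := by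
  rw [← Fintype.range_linearCombination, ← Fintype.range_linearCombination] at h
  obtain ⟨e, he⟩ := exists_linearEquiv_comp_eq_of_range_eq h.symm
  refine ⟨⟨LinearMap.toMatrixRight' e.toLinearMap, LinearMap.toMatrixRight' e.symm.toLinearMap,
    ?_, ?_⟩, funext fun i => ?_⟩
  · simp [← LinearMap.toMatrixRight'_comp]
  · simp [← LinearMap.toMatrixRight'_comp]
  · calc (LinearMap.toMatrixRight' e.toLinearMap • u) i
        = (Fintype.linearCombination K u ∘ₗ e.toLinearMap) (Pi.single i 1) :=
          toMatrixRight'_smul_apply _ u i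
      _ = v i := by rw [he, Fintype.linearCombination_apply_single, one_smul]

end MatrixAction

section Schur

variable {ι K A U : Type*} [Ring K] [Semiring A] [AddCommGroup U] [Module K U] [Module A U]
  [SMulCommClass K A U]

theorem exists_matrix_smul_eq_of_toModuleEnd_surjective [Fintype ι] [DecidableEq ι]
    (hK : Function.Surjective (Module.toModuleEnd A (S := K) U)) (φ : Module.End A (ι → U)) :
    ∃ P : Matrix ι ι K, ∀ x, φ x = P • x := by
  choose P hP using fun i j => hK (endVecRingEquivMatrixEnd ι A U φ i j)
  refine ⟨.of P, fun x => funext fun i => ?_⟩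
  calc φ x i = ∑ j, endVecRingEquivMatrixEnd ι A U φ i j (x j) :=
        congrFun (LinearMap.congr_fun
          ((endVecRingEquivMatrixEnd ι A U).symm_apply_apply φ).symm x) i
    _ = ∑ j, P i j • x j := by simp only [← hP, Module.toModuleEnd_apply]; rfl

theorem span_range_linearEquiv_apply_eq [Finite ι]
    (hK : Function.Surjective (Module.toModuleEnd A (S := K) U))
    (φ : (ι → U) ≃ₗ[A] (ι → U)) (u : ι → U) :
    Submodule.span K (Set.range (φ u)) = Submodule.span K (Set.range u) := by
  classical
  have := Fintype.ofFinite ι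
  have span_apply_le (ψ : (ι → U) ≃ₗ[A] (ι → U)) (x : ι → U) :
      Submodule.span K (Set.range (ψ x)) ≤ Submodule.span K (Set.range x) := by
    obtain ⟨P, hP⟩ := exists_matrix_smul_eq_of_toModuleEnd_surjective hK ψ.toLinearMap
    exact hP x ▸ span_range_matrix_smul_le P x
  exact (span_apply_le φ u).antisymm (by simpa using span_apply_le φ.symm (φ u))

end Schur

theorem span_range_smul_eq_of_isUnit {ι R M : Type*} [Semiring R] [AddCommMonoid M] [Module R M]
    {c : R} (hc : IsUnit c) (v : ι → M) :
    Submodule.span R (Set.range (c • v)) = Submodule.span R (Set.range v) := by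
  have smul_le (a : R) (w : ι → M) :
      Submodule.span R (Set.range (a • w)) ≤ Submodule.span R (Set.range w) := by
    rw [Submodule.span_le]
    rintro _ ⟨i, rfl⟩
    exact Submodule.smul_mem _ a (Submodule.subset_span (Set.mem_range_self i))
  obtain ⟨a, rfl⟩ := hc
  refine (smul_le a v).antisymm ?_
  simpa only [smul_smul, Units.inv_mul, one_smul] using smul_le ↑a⁻¹ ((a : R) • v)

/-- Taking `K = Module.End A U` covers every simple module `U` over an arbitrary ring `A`. -/
theorem glider_iso_iff_span_eq_general {ι K A U : Type*} [Finite ι] [DivisionRing K] [Semiring A]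
    [AddCommGroup U] [Module K U] [Module A U] [SMulCommClass K A U]
    (hK : Function.Surjective (Module.toModuleEnd A (S := K) U)) (u v : ι → U) :
    (∃ (φ : (ι → U) ≃ₗ[A] (ι → U)) (c : K), c ≠ 0 ∧ φ u = c • v)
      ↔ Submodule.span K (Set.range u) = Submodule.span K (Set.range v) := by
  constructor
  · rintro ⟨φ, c, hc, hφ⟩
    rw [← span_range_linearEquiv_apply_eq hK φ u, hφ, span_range_smul_eq_of_isUnit hc.isUnit]
  · intro h
    classical
    have := Fintype.ofFinite ι
    obtain ⟨P, hP⟩ := exists_matrix_units_smul_eq_of_span_range_eq h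
    exact ⟨DistribMulAction.toLinearEquiv A (ι → U) P, 1, one_ne_zero, by simpa using hP⟩

/-- **Grassmannian criterion for isomorphism of irreducible glider representations.**
Let `K` be an algebraically closed field of characteristic 0, `G` a finite group, `U` a
simple `K[G]`-module, `m ≥ 1`, and `u = (u₁, …, u_m)`, `v = (v₁, …, v_m)` elements of
`U^{⊕ m}` whose component families are linearly independent over `K`. Then there is a
`K[G]`-module automorphism `φ` of `U^{⊕ m}` and a nonzero scalar `c` with `φ(u) = c • v`
if and only if `Span_K {u₁, …, u_m} = Span_K {v₁, …, v_m}`. -/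
theorem glider_iso_iff_span_eq
    (K : Type) [Field K] [IsAlgClosed K] [CharZero K]
    (G : Type) [Group G] [Finite G]
    (U : Type) [AddCommGroup U] [Module K U]
    [Module (MonoidAlgebra K G) U] [IsScalarTower K (MonoidAlgebra K G) U]
    (hU : IsSimpleModule (MonoidAlgebra K G) U)
    (m : ℕ) (hm : 1 ≤ m)
    (u v : Fin m → U)
    (hu : LinearIndependent K u) (hv : LinearIndependent K v) :
    (∃ (φ : (Fin m → U) ≃ₗ[MonoidAlgebra K G] (Fin m → U)) (c : K),
        c ≠ 0 ∧ φ u = c • v)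
      ↔ Submodule.span K (Set.range u) = Submodule.span K (Set.range v) := by
  have : FiniteDimensional K U := Module.Finite.trans (MonoidAlgebra K G) U
  exact glider_iso_iff_span_eq_general
    (IsSimpleModule.algebraMap_end_bijective_of_isAlgClosed K).surjective u v
end

section
/- Let K be a field of characteristic 0, G a finite group, and let ρ and σ be representations of G on K-vector spaces M and N respectively. For a group homomorphism χ : G → Kˣ define the averaging operator p_χ^ρ = |G|⁻¹ · Σ_{g ∈ G} χ(g)⁻¹ · ρ(g) ∈ End_K(M), and similarly on N and on M ⊗ N for the tensor product representation ρ ⊗ σ (where g acts by ρ(g) ⊗ σ(g)). If u ∈ M satisfies p_χ^ρ(u) ≠ 0 and v ∈ N satisfies p_ψ^σ(v) ≠ 0, for homomorphisms χ, ψ : G → Kˣ, then p_{χψ}^{ρ⊗σ}(u ⊗ v) ≠ 0. -/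
open scoped TensorProduct

/-- The averaging operator `p_χ^ρ = |G|⁻¹ ∑_{g ∈ G} χ(g)⁻¹ ρ(g)`, projecting onto the
`χ`-isotypic component of a representation `ρ` of a finite group `G`. -/
noncomputable def avgProj {K G M : Type*} [Field K] [Group G] [Fintype G]
    [AddCommGroup M] [Module K M]
    (ρ : Representation K G M) (χ : G →* Kˣ) : M →ₗ[K] M :=
  (Fintype.card G : K)⁻¹ • ∑ g : G, (((χ g)⁻¹ : Kˣ) : K) • (ρ g)

/- The tensor product `p_χ ⊗ p_ψ` transforms by `χψ` under the diagonal action, and a linear map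
transforming by a character does not see the averaging over that character. Hence
`(p_χ ⊗ p_ψ) ∘ p_{χψ} = p_χ ⊗ p_ψ`, which sends `u ⊗ v` to `p_χ u ⊗ p_ψ v ≠ 0`. -/

section AvgProj

variable {K G M N : Type*} [Field K] [Group G] [Fintype G]
  [AddCommGroup M] [Module K M] [AddCommGroup N] [Module K N]
  (ρ : Representation K G M) (σ : Representation K G N) (χ ψ : G →* Kˣ)

theorem avgProj_apply (m : M) :
    avgProj ρ χ m = (Fintype.card G : K)⁻¹ • ∑ g, (↑(χ g)⁻¹ : K) • ρ g m := by
  simp only [avgProj, LinearMap.smul_apply, LinearMap.sum_apply]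

theorem avgProj_apply_rep (h : G) (m : M) :
    avgProj ρ χ (ρ h m) = (χ h : K) • avgProj ρ χ m := by
  have term_mul_right (g : G) : (↑(χ g)⁻¹ : K) • ρ g (ρ h m) =
      (χ h : K) • (↑(χ (g * h))⁻¹ : K) • ρ (g * h) m := by
    rw [smul_smul, map_mul χ, mul_inv_rev, Units.val_mul, Units.mul_inv_cancel_left,
      map_mul ρ, Module.End.mul_apply]
  calc
    avgProj ρ χ (ρ h m)
        = (Fintype.card G : K)⁻¹ • ∑ g, (χ h : K) • (↑(χ (g * h))⁻¹ : K) • ρ (g * h) m := by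
      simp only [avgProj_apply, term_mul_right]
    _ = (Fintype.card G : K)⁻¹ • ∑ g, (χ h : K) • (↑(χ g)⁻¹ : K) • ρ g m := by
      rw [(Group.mulRight_bijective h).sum_comp fun g ↦ (χ h : K) • (↑(χ g)⁻¹ : K) • ρ g m]
    _ = (χ h : K) • avgProj ρ χ m := by
      rw [← Finset.smul_sum, smul_comm, avgProj_apply]

variable {ρ χ} in
theorem map_avgProj_of_map_rep_eq_smul (hG : (Fintype.card G : K) ≠ 0) {f : M →ₗ[K] N}
    (hf : ∀ g m, f (ρ g m) = (χ g : K) • f m) (m : M) : f (avgProj ρ χ m) = f m := by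
  calc
    f (avgProj ρ χ m) = (Fintype.card G : K)⁻¹ • ∑ _g : G, f m := by
      simp only [avgProj_apply, map_smul, map_sum, hf, smul_smul, Units.inv_mul, one_smul]
    _ = f m := by
      rw [Finset.sum_const, Finset.card_univ, ← Nat.cast_smul_eq_nsmul K, inv_smul_smul₀ hG]

theorem map_avgProj_avgProj_apply_tprod (g : G) (t : M ⊗[K] N) :
    TensorProduct.map (avgProj ρ χ) (avgProj σ ψ) (ρ.tprod σ g t) =
      ((χ * ψ) g : K) • TensorProduct.map (avgProj ρ χ) (avgProj σ ψ) t := by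
  induction t with
  | zero => simp only [map_zero, smul_zero]
  | add s t hs ht => simp only [map_add, hs, ht, smul_add]
  | tmul m n =>
    simp only [Representation.tprod_apply, TensorProduct.map_tmul, avgProj_apply_rep,
      TensorProduct.smul_tmul_smul, MonoidHom.mul_apply, Units.val_mul]

theorem map_avgProj_avgProj_apply_avgProj_tprod (hG : (Fintype.card G : K) ≠ 0)
    (t : M ⊗[K] N) :
    TensorProduct.map (avgProj ρ χ) (avgProj σ ψ) (avgProj (ρ.tprod σ) (χ * ψ) t) =
      TensorProduct.map (avgProj ρ χ) (avgProj σ ψ) t :=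
  map_avgProj_of_map_rep_eq_smul hG (map_avgProj_avgProj_apply_tprod ρ σ χ ψ) t

end AvgProj

theorem tmul_ne_zero_of_projective {R M N : Type*} [CommSemiring R] [NoZeroDivisors R]
    [AddCommMonoid M] [Module R M] [Module.Projective R M]
    [AddCommMonoid N] [Module R N] [Module.Projective R N]
    {m : M} {n : N} (hm : m ≠ 0) (hn : n ≠ 0) : m ⊗ₜ[R] n ≠ 0 := by
  obtain ⟨f, hf⟩ := Module.Projective.exists_dual_ne_zero R hm
  obtain ⟨k, hk⟩ := Module.Projective.exists_dual_ne_zero R hn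
  intro hmn
  have hfk : f m * k n = 0 := by
    simpa using congrArg (LinearMap.mul' R R ∘ₗ TensorProduct.map f k) hmn
  exact mul_ne_zero hf hk hfk

theorem avgProj_tprod_ne_zero_general {K G M N : Type*} [Field K] [Group G] [Fintype G]
    [AddCommGroup M] [Module K M] [AddCommGroup N] [Module K N]
    (hG : (Fintype.card G : K) ≠ 0) (ρ : Representation K G M) (σ : Representation K G N)
    (χ ψ : G →* Kˣ) (u : M) (v : N)
    (hu : avgProj ρ χ u ≠ 0) (hv : avgProj σ ψ v ≠ 0) :
    avgProj (ρ.tprod σ) (χ * ψ) (u ⊗ₜ[K] v) ≠ 0 := by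
  intro huv
  refine tmul_ne_zero_of_projective (R := K) hu hv ?_
  calc
    avgProj ρ χ u ⊗ₜ[K] avgProj σ ψ v
        = TensorProduct.map (avgProj ρ χ) (avgProj σ ψ)
            (avgProj (ρ.tprod σ) (χ * ψ) (u ⊗ₜ v)) := by
      rw [map_avgProj_avgProj_apply_avgProj_tprod ρ σ χ ψ hG, TensorProduct.map_tmul]
    _ = 0 := by rw [huv, map_zero]

/-- If `p_χ^ρ(u) ≠ 0` and `p_ψ^σ(v) ≠ 0`, then for the tensor product representation
(diagonal `G`-action) one has `p_{χψ}^{ρ ⊗ σ}(u ⊗ v) ≠ 0`. -/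
theorem avgProj_tprod_ne_zero {K G M N : Type} [Field K] [CharZero K]
    [Group G] [Fintype G]
    [AddCommGroup M] [Module K M] [AddCommGroup N] [Module K N]
    (ρ : Representation K G M) (σ : Representation K G N)
    (χ ψ : G →* Kˣ) (u : M) (v : N)
    (hu : avgProj ρ χ u ≠ 0) (hv : avgProj σ ψ v ≠ 0) :
    avgProj (ρ.tprod σ) (χ * ψ) (u ⊗ₜ[K] v) ≠ 0 :=
  avgProj_tprod_ne_zero_general (Nat.cast_ne_zero.2 Fintype.card_ne_zero) ρ σ χ ψ u v hu hv
end

section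
/- Let K be an algebraically closed field of characteristic 0 and G a finite group. Let M, N, N' be finite-dimensional K[G]-modules, u ∈ M, w ∈ N, w' ∈ N'. Then for every simple K[G]-module W, the multiplicity of W in the cyclic submodule of M ⊗ (N ⊕ N') generated by u ⊗ (w, 0) is at most the multiplicity of W in the cyclic submodule of M ⊗ (N ⊕ N') generated by u ⊗ (w, w'); that is, dim_K Hom_{K[G]}(W, K[G]·(u ⊗ (w,0))) ≤ dim_K Hom_{K[G]}(W, K[G]·(u ⊗ (w,w'))). -/
open scoped TensorProduct

/-- The direct sum of two representations of `G`. -/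
def prodRep {k G M N : Type*} [CommSemiring k] [Monoid G]
    [AddCommMonoid M] [Module k M] [AddCommMonoid N] [Module k N]
    (ρ : Representation k G M) (σ : Representation k G N) :
    Representation k G (M × N) where
  toFun g := (ρ g).prodMap (σ g)
  map_one' := by
    apply LinearMap.ext
    rintro ⟨x, y⟩
    simp
  map_mul' g h := by
    apply LinearMap.ext
    rintro ⟨x, y⟩
    simp

/-- The cyclic `K[G]`-submodule generated by a vector `x`: the `K`-span of the
`G`-orbit of `x`. -/
def cyclicSubmodule {k G X : Type*} [CommSemiring k] [Monoid G]
    [AddCommMonoid X] [Module k X] (τ : Representation k G X) (x : X) :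
    Submodule k X :=
  Submodule.span k (Set.range fun g => τ g x)

/-- The space `Hom_{K[G]}(W, N)` of equivariant linear maps from `W` to `X` whose image is
contained in the submodule `N` of `X`, as a `k`-submodule of `W →ₗ[k] X`. -/
def equivHomInto {k G W X : Type*} [CommSemiring k] [Monoid G]
    [AddCommMonoid W] [Module k W] [AddCommMonoid X] [Module k X]
    (σ : Representation k G W) (τ : Representation k G X) (N : Submodule k X) :
    Submodule k (W →ₗ[k] X) where
  carrier := {f | (∀ (g : G) (w : W), f (σ g w) = τ g (f w)) ∧ ∀ w : W, f w ∈ N}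
  add_mem' := by
    intro f g hf hg
    refine ⟨fun g' w => ?_, fun w => ?_⟩
    · simp [hf.1, hg.1]
    · exact N.add_mem (hf.2 w) (hg.2 w)
  zero_mem' := by
    exact ⟨fun g w => by simp, fun w => by simp⟩
  smul_mem' := by
    intro c f hf
    refine ⟨fun g w => ?_, fun w => ?_⟩
    · simp [hf.1]
    · exact N.smul_mem c (hf.2 w)

/-!
The `K[G]`-endomorphism `id ⊗ (inl ∘ fst)` of `M ⊗ (N ⊕ N')` sends `u ⊗ (w, w')` to `u ⊗ (w, 0)`,
hence maps the cyclic submodule of the first vector onto that of the second. By semisimplicity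
equivariant maps lift along this surjection, so postcomposition with it maps one Hom space onto
the other.
-/

theorem exists_range_le_and_comp_eq_of_range_le_map {R W X Y : Type*} [Ring R]
    [AddCommGroup W] [Module R W] [AddCommGroup X] [Module R X]
    [AddCommGroup Y] [Module R Y] (p : X →ₗ[R] Y) (P : Submodule R X) [IsSemisimpleModule R P]
    (f : W →ₗ[R] Y) (hf : LinearMap.range f ≤ P.map p) :
    ∃ f' : W →ₗ[R] X, LinearMap.range f' ≤ P ∧ p ∘ₗ f' = f := by
  have hf_mem : ∀ w, f w ∈ P.map p := fun w => hf (LinearMap.mem_range_self f w)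
  obtain ⟨l, hl⟩ := IsSemisimpleModule.lifting_property (p.submoduleMap P)
    (p.submoduleMap_surjective P) (f.codRestrict (P.map p) hf_mem)
  refine ⟨P.subtype ∘ₗ l, ?_, ?_⟩
  · rintro _ ⟨w, rfl⟩
    exact (l w).2
  · ext w
    exact congrArg Subtype.val (LinearMap.congr_fun hl w)

theorem finite_of_finite_asModule {k G W : Type*} [CommSemiring k] [Monoid G] [Finite G]
    [AddCommMonoid W] [Module k W] (σ : Representation k G W)
    [Module.Finite (MonoidAlgebra k G) σ.asModule] : Module.Finite k W :=
  have : Module.Finite k σ.asModule := .trans (MonoidAlgebra k G) σ.asModule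
  .equiv σ.asModuleEquiv

section Semiring

open Representation

variable {k G X Y : Type*} [CommSemiring k] [Monoid G] [AddCommMonoid X] [Module k X]
  [AddCommMonoid Y] [Module k Y] {τ : Representation k G X} {τ' : Representation k G Y}

theorem map_cyclicSubmodule (p : IntertwiningMap τ τ') (x : X) :
    (cyclicSubmodule τ x).map p.toLinearMap = cyclicSubmodule τ' (p x) := by
  simp only [cyclicSubmodule, Submodule.map_span, ← Set.range_comp, Function.comp_def,
    IntertwiningMap.toLinearMap_apply, p.isIntertwining]

variable (τ) in
/-- The cyclic submodule generated by `x`, bundled with its stability under `G`. -/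
def cyclicSubrepresentation (x : X) : Subrepresentation τ where
  toSubmodule := cyclicSubmodule τ x
  apply_mem_toSubmodule g := by
    suffices cyclicSubmodule τ x ≤ (cyclicSubmodule τ x).comap (τ g) from fun _ hy => this hy
    refine Submodule.span_le.2 (Set.range_subset_iff.2 fun h => Submodule.subset_span ⟨g * h, ?_⟩)
    simp only [map_mul, Module.End.mul_apply]

end Semiring

section Ring

open Representation

variable {k G W X Y : Type*} [CommRing k] [Monoid G] [AddCommGroup W] [Module k W]
  [AddCommGroup X] [Module k X] [AddCommGroup Y] [Module k Y]
  (σ : Representation k G W) {τ : Representation k G X} {τ' : Representation k G Y}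
  [IsSemisimpleModule (MonoidAlgebra k G) τ.asModule]

theorem exists_comp_eq_of_forall_mem_map (p : IntertwiningMap τ τ') (P : Subrepresentation τ)
    (f : IntertwiningMap σ τ') (hf : ∀ w, f w ∈ P.toSubmodule.map p.toLinearMap) :
    ∃ f' : IntertwiningMap σ τ, (∀ w, f' w ∈ P) ∧ p.comp f' = f := by
  obtain ⟨f', hf'P, hf'⟩ := exists_range_le_and_comp_eq_of_range_le_map
    (IntertwiningMap.equivLinearMapAsModule τ τ' p) P.asSubmodule
    (IntertwiningMap.equivLinearMapAsModule σ τ' f) (by rintro _ ⟨w, rfl⟩; exact hf w)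
  refine ⟨(IntertwiningMap.equivLinearMapAsModule σ τ).symm f', ?_, ?_⟩
  · exact fun w => hf'P ⟨w, rfl⟩
  · ext w
    exact LinearMap.congr_fun hf' w

theorem map_equivHomInto (p : IntertwiningMap τ τ') (P : Subrepresentation τ) :
    (equivHomInto σ τ P.toSubmodule).map (p.toLinearMap.compRight k) =
      equivHomInto σ τ' (P.toSubmodule.map p.toLinearMap) := by
  apply le_antisymm
  · rintro _ ⟨f, ⟨hf, hfP⟩, rfl⟩
    exact ⟨fun g w => by simp [hf, p.isIntertwining],
      fun w => Submodule.mem_map_of_mem (hfP w)⟩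
  · rintro f ⟨hf, hfP⟩
    obtain ⟨f', hf'P, hf'⟩ := exists_comp_eq_of_forall_mem_map σ p P
      (f.intertwiningMap_of_isIntertwiningMap σ τ' hf) hfP
    exact ⟨f'.toLinearMap, ⟨f'.isIntertwining, hf'P⟩,
      congrArg IntertwiningMap.toLinearMap hf'⟩

theorem map_equivHomInto_cyclicSubmodule (p : IntertwiningMap τ τ') (x : X) :
    (equivHomInto σ τ (cyclicSubmodule τ x)).map (p.toLinearMap.compRight k) =
      equivHomInto σ τ' (cyclicSubmodule τ' (p x)) := by
  rw [← map_cyclicSubmodule]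
  exact map_equivHomInto σ p (cyclicSubrepresentation τ x)

end Ring

theorem multiplicity_cyclic_mono_general {K G M N N' W : Type*} [CommRing K] [Monoid G]
    [AddCommGroup M] [Module K M] [AddCommGroup N] [Module K N]
    [AddCommGroup N'] [Module K N'] [AddCommGroup W] [Module K W]
    (ρM : Representation K G M) (ρN : Representation K G N) (ρN' : Representation K G N')
    (σ : Representation K G W)
    [IsSemisimpleModule (MonoidAlgebra K G) (ρM.tprod (prodRep ρN ρN')).asModule]
    (u : M) (w : N) (w' : N') :
    Module.rank K
        (equivHomInto σ (ρM.tprod (prodRep ρN ρN'))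
          (cyclicSubmodule (ρM.tprod (prodRep ρN ρN')) (u ⊗ₜ[K] ((w, 0) : N × N')))) ≤
      Module.rank K
        (equivHomInto σ (ρM.tprod (prodRep ρN ρN'))
          (cyclicSubmodule (ρM.tprod (prodRep ρN ρN')) (u ⊗ₜ[K] ((w, w') : N × N')))) := by
  -- `prodRep` unfolds to `Representation.prod`, whose inclusion and projection are used here.
  let forgetSnd : Representation.IntertwiningMap (prodRep ρN ρN') (prodRep ρN ρN') :=
    (Representation.IntertwiningMap.inl K ρN ρN').comp (.fst K ρN ρN')
  let p := forgetSnd.lTensor ρM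
  have hp : p (u ⊗ₜ[K] (w, w')) = u ⊗ₜ[K] (w, 0) := rfl
  rw [← hp, ← map_equivHomInto_cyclicSubmodule]
  exact rank_map_le _ _

/-- **Monotonicity of multiplicities.** For finite-dimensional `K[G]`-modules `M, N, N'`
over an algebraically closed field `K` of characteristic 0 with `G` finite, and vectors
`u ∈ M`, `w ∈ N`, `w' ∈ N'`, the multiplicity of any simple `K[G]`-module `W` in the
cyclic submodule of `M ⊗ (N ⊕ N')` generated by `u ⊗ (w, 0)` is at most its multiplicity
in the cyclic submodule generated by `u ⊗ (w, w')`. (The multiplicity is the `K`-dimension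
of the space of equivariant maps from `W` into the corresponding cyclic submodule.) -/
theorem multiplicity_cyclic_mono
    (K : Type) [Field K] [IsAlgClosed K] [CharZero K]
    (G : Type) [Group G] [Finite G]
    (M N N' W : Type)
    [AddCommGroup M] [Module K M] [FiniteDimensional K M]
    [AddCommGroup N] [Module K N] [FiniteDimensional K N]
    [AddCommGroup N'] [Module K N'] [FiniteDimensional K N']
    [AddCommGroup W] [Module K W]
    (ρM : Representation K G M) (ρN : Representation K G N)
    (ρN' : Representation K G N')
    (σ : Representation K G W)
    (hW : IsSimpleModule (MonoidAlgebra K G) σ.asModule)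
    (u : M) (w : N) (w' : N') :
    Cardinal.toNat (Module.rank K
        ↥(equivHomInto σ (ρM.tprod (prodRep ρN ρN'))
            (cyclicSubmodule (ρM.tprod (prodRep ρN ρN')) (u ⊗ₜ[K] ((w, 0) : N × N')))))
      ≤ Cardinal.toNat (Module.rank K
        ↥(equivHomInto σ (ρM.tprod (prodRep ρN ρN'))
            (cyclicSubmodule (ρM.tprod (prodRep ρN ρN')) (u ⊗ₜ[K] ((w, w') : N × N'))))) := by
  have : Module.Finite K W := finite_of_finite_asModule σ
  exact Cardinal.toNat_le_toNat (multiplicity_cyclic_mono_general ρM ρN ρN' σ u w w')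
    (Module.rank_lt_aleph0 K _)
end

section
/- Let G be a finite nilpotent group and M a finite-dimensional complex representation of G generated by a vector u (i.e. ℂ[G]·u = M). Assume: (i) M contains a nonzero G-fixed vector (a trivial subrepresentation); (ii) every one-dimensional subrepresentation of M is trivial (G acts trivially on it); and (iii) there exists an isomorphism of ℂ[G]-modules φ from the cyclic submodule ℂ[G]·(u ⊗ u) of M ⊗ M onto M such that φ(u ⊗ u) = c·u for some nonzero scalar c ∈ ℂ. Then dim_ℂ M = 1 and G acts trivially on M. -/
open scoped TensorProduct

/-!
Up to a scalar, the inverse of the isomorphism from the submodule generated by `u ⊗ u` onto `M` is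
an equivariant map `D : M → M ⊗ M` with `D u = u ⊗ u`. It sends every vector `g • u` of the orbit of
`u` to its own tensor square, just as a comultiplication does with its group-like elements. Such
vectors are linearly independent, so `M` is the permutation representation on `G ⧸ H`, where `H` is
the stabilizer of `u`. If `H` were a proper subgroup, it would lie in a maximal subgroup, which is
normal with cyclic quotient since `G` is nilpotent; hence a nontrivial linear character `χ` of `G`
would be trivial on `H`, and the permutation representation would contain `χ`, contrary to (ii).
-/

open Module

section GroupLike

variable {K M : Type*} [Field K] [AddCommGroup M] [Module K M]

/-- The group-like elements of a linear map `D : M → M ⊗ M`. Unlike in `IsGroupLikeElem`, there is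
neither coassociativity nor a counit; the condition `x ≠ 0` replaces `ε x = 1`. -/
def groupLikeSet (D : M →ₗ[K] M ⊗[K] M) : Set M :=
  {x | x ≠ 0 ∧ D x = x ⊗ₜ[K] x}

theorem exists_dual_of_mem_span {s : Set M} (hs : LinearIndepOn K id s) {a : M}
    (ha : a ∈ Submodule.span K s) (ha₀ : a ≠ 0) :
    ∃ y ∈ s, ∃ f : Dual K M, f a ≠ 0 ∧ ∀ x ∈ s, x ≠ y → f x = 0 := by
  obtain ⟨l, rfl⟩ := (Finsupp.mem_span_iff_linearCombination K s a).1 ha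
  obtain ⟨y, hy⟩ := Finsupp.ne_iff.1 fun hl : l = 0 => ha₀ (by rw [hl, map_zero])
  obtain ⟨coords, hcoords⟩ := LinearMap.exists_leftInverse_of_injective
    (Finsupp.linearCombination K ((↑) : s → M)) (LinearMap.ker_eq_bot.2 hs)
  have hcoords_l : coords (Finsupp.linearCombination K ((↑) : s → M) l) = l :=
    LinearMap.congr_fun hcoords l
  have hcoords_mem (x : s) : coords x = Finsupp.single x 1 := by
    simpa using LinearMap.congr_fun hcoords (Finsupp.single x 1)
  refine ⟨y, y.2, Finsupp.lapply y ∘ₗ coords, ?_, fun x hx hxy => ?_⟩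
  · simpa [hcoords_l] using hy
  · simp [hcoords_mem ⟨x, hx⟩, Subtype.ext_iff, hxy]

/-- If the functional `f` vanishes on `s \ {y}`, then `(f ⊗ id) ∘ D` agrees with `x ↦ f x • y` on
`s`, hence on its span; at `a` this reads `f a • a = f a • y`. -/
theorem mem_of_mem_span_of_mem_groupLikeSet {D : M →ₗ[K] M ⊗[K] M} {s : Set M}
    (hs : LinearIndepOn K id s) (hsD : s ⊆ groupLikeSet D) {a : M} (ha : a ∈ groupLikeSet D)
    (has : a ∈ Submodule.span K s) : a ∈ s := by
  obtain ⟨y, hy, f, hfa, hf⟩ := exists_dual_of_mem_span hs has ha.1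
  let F : M →ₗ[K] M := TensorProduct.lid K M ∘ₗ f.rTensor M ∘ₗ D
  have hF {x : M} (hx : x ∈ groupLikeSet D) : F x = f x • x := by simp [F, hx.2]
  have hspan : Set.EqOn F (f.smulRight y) (Submodule.span K s) := by
    refine LinearMap.eqOn_span fun x hx => ?_
    rw [hF (hsD hx), LinearMap.smulRight_apply]
    obtain rfl | hxy := eq_or_ne x y
    · rfl
    · simp [hf x hx hxy]
  have hay : f a • a = f a • y := by rw [← hF ha, hspan has, LinearMap.smulRight_apply]
  exact smul_right_injective M hfa hay ▸ hy

theorem linearIndepOn_groupLikeSet (D : M →ₗ[K] M ⊗[K] M) :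
    LinearIndepOn K id (groupLikeSet D) := by
  obtain ⟨b, hbD, -, hspan, hb⟩ :=
    exists_linearIndepOn_id_extension (linearIndepOn_empty K id) (Set.empty_subset (groupLikeSet D))
  exact hb.mono fun a ha => mem_of_mem_span_of_mem_groupLikeSet hb hbD ha (hspan ha)

end GroupLike

section Character

variable {G : Type*} [Group G]

theorem isCyclic_of_isSimpleOrder_subgroup [IsSimpleOrder (Subgroup G)] : IsCyclic G := by
  have : Nontrivial G := Subgroup.nontrivial_iff.1 inferInstance
  obtain ⟨g, hg⟩ := exists_ne (1 : G)
  have htop : Subgroup.zpowers g = ⊤ :=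
    (eq_bot_or_eq_top _).resolve_left (Subgroup.zpowers_ne_bot.2 hg)
  exact ⟨g, (Subgroup.eq_top_iff' _).1 htop⟩

theorem isCyclic_quotient_of_isCoatom {L : Subgroup G} [L.Normal] (hL : IsCoatom L) :
    IsCyclic (G ⧸ L) := by
  have : IsSimpleOrder (Set.Ici L) := Set.isSimpleOrder_Ici_iff_isCoatom.2 hL
  have e : Subgroup (G ⧸ L) ≃o Set.Ici L := QuotientGroup.comapMk'OrderIso L
  have : IsSimpleOrder (Subgroup (G ⧸ L)) := e.isSimpleOrder
  exact isCyclic_of_isSimpleOrder_subgroup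

theorem exists_isCoatom_of_finiteIndex {H : Subgroup G} [H.FiniteIndex] (hH : H ≠ ⊤) :
    ∃ L, IsCoatom L ∧ H ≤ L := by
  let π := QuotientGroup.mk' H.normalCore
  have hπ : Function.Surjective π := QuotientGroup.mk'_surjective _
  have hcomap : (H.map π).comap π = H :=
    Subgroup.comap_map_eq_self (by simpa [π] using H.normalCore_le)
  have hmap : H.map π ≠ ⊤ := fun h => hH (by rw [← hcomap, h, Subgroup.comap_top])
  obtain ⟨L, hL, hHL⟩ := (eq_top_or_exists_le_coatom (H.map π)).resolve_left hmap
  exact ⟨L.comap π, Subgroup.isCoatom_comap_of_surjective hπ hL, Subgroup.map_le_iff_le_comap.1 hHL⟩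

theorem exists_le_ker_ne_one_of_ne_top (hG : NormalizerCondition G) {H : Subgroup G}
    [H.FiniteIndex] (hH : H ≠ ⊤) (R : Type*) [CommMonoid R] [HasEnoughRootsOfUnity R H.index] :
    ∃ χ : G →* Rˣ, H ≤ χ.ker ∧ χ ≠ 1 := by
  obtain ⟨L, hL, hHL⟩ := exists_isCoatom_of_finiteIndex hH
  have : L.Normal := Subgroup.NormalizerCondition.normal_of_coatom L hG hL
  have : L.FiniteIndex := Subgroup.finiteIndex_of_le hHL
  have : IsCyclic (G ⧸ L) := isCyclic_quotient_of_isCoatom hL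
  let : CommGroup (G ⧸ L) := IsCyclic.commGroup
  have : NeZero H.index := ⟨Subgroup.FiniteIndex.index_ne_zero⟩
  have : HasEnoughRootsOfUnity R (Monoid.exponent (G ⧸ L)) :=
    .of_dvd R (Group.exponent_dvd_nat_card.trans (Subgroup.index_dvd_of_le hHL))
  obtain ⟨g, hg⟩ : ∃ g, g ∉ L := by simpa [Subgroup.eq_top_iff'] using hL.1
  have hg' : (g : G ⧸ L) ≠ 1 := mt (QuotientGroup.eq_one_iff g).1 hg
  obtain ⟨ψ, hψ⟩ := CommGroup.exists_apply_ne_one_of_hasEnoughRootsOfUnity (G ⧸ L) R hg'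
  refine ⟨ψ.comp (QuotientGroup.mk' L), fun h hh => ?_, fun h => hψ (DFunLike.congr_fun h g)⟩
  simp [MonoidHom.mem_ker, (QuotientGroup.eq_one_iff h).2 (hHL hh)]

end Character

section Orbit

open MulAction

variable {K G M : Type*} [Field K] [Group G] [AddCommGroup M] [Module K M] {u : M}

theorem linearIndependent_ofQuotientStabilizer [MulAction G M]
    (h : LinearIndepOn K id (orbit G u)) :
    LinearIndependent K (ofQuotientStabilizer G u) := by
  have hrange : Set.range (ofQuotientStabilizer G u) ⊆ orbit G u :=
    Set.range_subset_iff.2 (ofQuotientStabilizer_mem_orbit G u)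
  exact (linearIndepOn_id_range_iff (injective_ofQuotientStabilizer G u)).1 (h.mono hrange)

theorem finrank_eq_index_stabilizer [MulAction G M] (h : LinearIndepOn K id (orbit G u))
    (hspan : Submodule.span K (orbit G u) = ⊤) : finrank K M = (stabilizer G u).index := by
  have b : Basis (orbit G u) K M := Basis.mk h (by simp [hspan])
  rw [finrank_eq_nat_card_basis b, index_stabilizer, Nat.card_coe_set_eq]

/-- The eigenvector is `∑ χ(q)⁻¹ q • u`, summed over the cosets `q` of the stabilizer of `u`. -/
theorem exists_eigenvector_of_stabilizer_le_ker [DistribMulAction G M] [SMulCommClass G K M]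
    [(stabilizer G u).FiniteIndex] (h : LinearIndepOn K id (orbit G u)) {χ : G →* Kˣ}
    (hχ : stabilizer G u ≤ χ.ker) : ∃ w : M, w ≠ 0 ∧ ∀ g : G, g • w = (χ g : K) • w := by
  have := Fintype.ofFinite (G ⧸ stabilizer G u)
  let χ' (q : G ⧸ stabilizer G u) : Kˣ :=
    QuotientGroup.kerLift χ (Subgroup.quotientMapOfLE hχ q)
  have hχ' (g : G) (q : G ⧸ stabilizer G u) : χ' (g • q) = χ g * χ' q := by
    induction q using QuotientGroup.induction_on with
    | H k => exact map_mul χ g k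
  let w : M := ∑ q, (χ' q)⁻¹ • ofQuotientStabilizer G u q
  refine ⟨w, fun hw => ?_, fun g => ?_⟩
  · have hcoeff := Fintype.linearIndependent_iff.1 (linearIndependent_ofQuotientStabilizer h)
      (fun q => ((χ' q)⁻¹ : Kˣ)) hw
    exact Units.ne_zero _ (hcoeff (1 : G))
  · rw [Finset.smul_sum, Finset.smul_sum]
    refine Fintype.sum_equiv (toPerm g) _ _ fun q => ?_
    rw [toPerm_apply, ofQuotientStabilizer_smul, smul_comm g, hχ', mul_inv, mul_smul,
      ← Units.smul_def, smul_inv_smul]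

end Orbit

section Glider

variable {K G M : Type*} [Field K] [Group G] [AddCommGroup M] [Module K M]

theorem eq_one_of_forall_apply_eq_smul {ρ : Representation K G M}
    (honedim : ∀ N : Submodule K M, (∀ g : G, ∀ x ∈ N, ρ g x ∈ N) →
      finrank K ↥N = 1 → ∀ g : G, ∀ x ∈ N, ρ g x = x)
    {χ : G →* Kˣ} {w : M} (hw : w ≠ 0) (hχ : ∀ g, ρ g w = (χ g : K) • w) : χ = 1 := by
  have hstable (g : G) (x) (hx : x ∈ K ∙ w) : ρ g x ∈ K ∙ w := by
    obtain ⟨a, rfl⟩ := Submodule.mem_span_singleton.1 hx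
    rw [map_smul, hχ, smul_smul]
    exact Submodule.smul_mem _ _ (Submodule.mem_span_singleton_self w)
  ext g
  have hg : (χ g : K) • w = (1 : K) • w := by
    rw [← hχ, one_smul]
    exact honedim (K ∙ w) hstable (finrank_span_singleton hw) g w
      (Submodule.mem_span_singleton_self w)
  exact smul_left_injective K hw hg

theorem finrank_eq_one_and_forall_apply_eq_of_apply_generator_eq {ρ : Representation K G M} {u : M}
    (hu₀ : u ≠ 0) (hgen : Submodule.span K (Set.range fun g => ρ g u) = ⊤)
    (hu : ∀ g, ρ g u = u) : finrank K M = 1 ∧ ∀ (g : G) (x : M), ρ g x = x := by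
  have hspan : K ∙ u = ⊤ := by simpa [hu, Set.range_const] using hgen
  refine ⟨by rw [← finrank_top, ← hspan, finrank_span_singleton hu₀], fun g x => ?_⟩
  obtain ⟨a, rfl⟩ := Submodule.mem_span_singleton.1 (hspan ▸ Submodule.mem_top : x ∈ K ∙ u)
  rw [map_smul, hu]

/-- The dimension `finrank K M` turns out to be the index of the stabilizer of `u`, so the linear
characters trivial on the stabilizer take values in roots of unity of that order. -/
theorem idempotent_glider_trivial_general [FiniteDimensional K M] [Nontrivial M]
    [HasEnoughRootsOfUnity K (finrank K M)] (hG : NormalizerCondition G)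
    (ρ : Representation K G M) (u : M)
    (hgen : Submodule.span K (Set.range fun g => ρ g u) = ⊤)
    (honedim : ∀ N : Submodule K M, (∀ g : G, ∀ x ∈ N, ρ g x ∈ N) →
      finrank K ↥N = 1 → ∀ g : G, ∀ x ∈ N, ρ g x = x)
    (D : M →ₗ[K] M ⊗[K] M) (hD : ∀ g, D (ρ g u) = ρ g u ⊗ₜ[K] ρ g u) :
    finrank K M = 1 ∧ ∀ (g : G) (x : M), ρ g x = x := by
  let : DistribMulAction G M := DistribMulAction.compHom M ρ
  have : SMulCommClass G K M := ⟨fun g a x => map_smul (ρ g) a x⟩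
  have hu₀ : u ≠ 0 := by
    rintro rfl
    simp [Set.range_const] at hgen
  have horbit : MulAction.orbit G u ⊆ groupLikeSet D := by
    rintro _ ⟨g, rfl⟩
    exact ⟨(smul_ne_zero_iff_ne g).2 hu₀, hD g⟩
  have hli : LinearIndepOn K id (MulAction.orbit G u) := (linearIndepOn_groupLikeSet D).mono horbit
  have hindex : finrank K M = (MulAction.stabilizer G u).index :=
    finrank_eq_index_stabilizer hli hgen
  have : (MulAction.stabilizer G u).FiniteIndex := ⟨hindex ▸ finrank_pos.ne'⟩
  have : HasEnoughRootsOfUnity K (MulAction.stabilizer G u).index := hindex ▸ inferInstance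
  have hstab : MulAction.stabilizer G u = ⊤ := by
    by_contra hne
    obtain ⟨χ, hχ, hχ₁⟩ := exists_le_ker_ne_one_of_ne_top hG hne K
    obtain ⟨w, hw₀, hw⟩ := exists_eigenvector_of_stabilizer_le_ker hli hχ
    exact hχ₁ (eq_one_of_forall_apply_eq_smul honedim hw₀ hw)
  exact finrank_eq_one_and_forall_apply_eq_of_apply_generator_eq hu₀ hgen
    fun g => (Subgroup.eq_top_iff' _).1 hstab g

theorem exists_linearMap_apply_eq_tmul_self {ρ : Representation K G M} {u : M}
    {C : Submodule K (M ⊗[K] M)} (hC : ∀ g, (ρ.tprod ρ) g (u ⊗ₜ[K] u) ∈ C)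
    (e : ↥C ≃ₗ[K] M) (c : K)
    (hequiv : ∀ (g : G) (x : M ⊗[K] M) (hx : x ∈ C) (hgx : (ρ.tprod ρ) g x ∈ C),
      e ⟨(ρ.tprod ρ) g x, hgx⟩ = ρ g (e ⟨x, hx⟩))
    (heu : ∀ h : u ⊗ₜ[K] u ∈ C, e ⟨u ⊗ₜ[K] u, h⟩ = c • u) :
    ∃ D : M →ₗ[K] M ⊗[K] M, ∀ g, D (ρ g u) = ρ g u ⊗ₜ[K] ρ g u := by
  have hu : u ⊗ₜ[K] u ∈ C := by simpa using hC 1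
  have he (g : G) : e ⟨(ρ.tprod ρ) g (u ⊗ₜ[K] u), hC g⟩ = c • ρ g u := by
    rw [hequiv g _ hu, heu, map_smul]
  refine ⟨c • (C.subtype ∘ₗ e.symm), fun g => ?_⟩
  calc c • (e.symm (ρ g u) : M ⊗[K] M) = e.symm (c • ρ g u) := by simp
    _ = (ρ.tprod ρ) g (u ⊗ₜ[K] u) := by rw [← he, e.symm_apply_apply]
    _ = ρ g u ⊗ₜ[K] ρ g u := by simp

end Glider

/-- **Idempotent gliders with only trivial linear constituents are trivial.**
Let `G` be a finite nilpotent group and `M` a finite-dimensional complex representation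
generated by a vector `u`. Assume: (i) `M` contains a nonzero `G`-fixed vector; (ii) every
one-dimensional subrepresentation of `M` is trivial; (iii) there is an isomorphism of
`ℂ[G]`-modules `e` from the cyclic submodule `ℂ[G]·(u ⊗ u)` of `M ⊗ M` (with the diagonal
action) onto `M` with `e (u ⊗ u) = c • u` for some `c ≠ 0`. Then `dim_ℂ M = 1` and `G`
acts trivially on `M`. -/
theorem idempotent_glider_trivial
    (G : Type) [Group G] [Finite G] (hnilp : Group.IsNilpotent G)
    (M : Type) [AddCommGroup M] [Module ℂ M] [FiniteDimensional ℂ M]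
    (ρ : Representation ℂ G M) (u : M)
    (hgen : Submodule.span ℂ (Set.range fun g => ρ g u) = ⊤)
    (hfix : ∃ x : M, x ≠ 0 ∧ ∀ g : G, ρ g x = x)
    (honedim : ∀ N : Submodule ℂ M, (∀ g : G, ∀ x ∈ N, ρ g x ∈ N) →
      Module.finrank ℂ ↥N = 1 → ∀ g : G, ∀ x ∈ N, ρ g x = x)
    (C : Submodule ℂ (M ⊗[ℂ] M))
    (hC : C = Submodule.span ℂ (Set.range fun g => (ρ.tprod ρ) g (u ⊗ₜ[ℂ] u)))
    (e : ↥C ≃ₗ[ℂ] M) (c : ℂ) (hc : c ≠ 0)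
    (hequiv : ∀ (g : G) (x : M ⊗[ℂ] M) (hx : x ∈ C) (hgx : (ρ.tprod ρ) g x ∈ C),
      e ⟨(ρ.tprod ρ) g x, hgx⟩ = ρ g (e ⟨x, hx⟩))
    (heu : ∀ h : u ⊗ₜ[ℂ] u ∈ C, e ⟨u ⊗ₜ[ℂ] u, h⟩ = c • u) :
    Module.finrank ℂ M = 1 ∧ ∀ (g : G) (x : M), ρ g x = x := by
  have : Nontrivial M := nontrivial_of_ne _ _ hfix.choose_spec.1
  have : NeZero (finrank ℂ M) := ⟨finrank_pos.ne'⟩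
  have hmem (g : G) : (ρ.tprod ρ) g (u ⊗ₜ[ℂ] u) ∈ C := hC ▸ Submodule.subset_span ⟨g, rfl⟩
  obtain ⟨D, hD⟩ := exists_linearMap_apply_eq_tmul_self hmem e c hequiv heu
  exact idempotent_glider_trivial_general Group.normalizerCondition_of_isNilpotent ρ u hgen honedim
    D hD
end
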